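/- arXiv:2104.05878 — 4 statements merged into one kernel-verified Lean document; each statement's English description precedes it below -/
import Mathlib

section
/- Let M be a random matrix distributed according to the Haar (uniform) probability measure on SO(n), and let h : SO(n) → ℝ be Lipschitz-continuous with constant L_h with respect to the Hilbert–Schmidt metric, with E[|h(M)|] < ∞. Then for every r ≥ 0, P(|h(M) − E[h(M)]| ≥ r) ≤ 2 exp(−r²(n−2)/(8 L_h²)). -/
open MeasureTheory ProbabilityTheory Matrix Kronecker
open scoped ENNReal NNReal

noncomputable section

instance {m n : Type*} : MeasurableSpace (Matrix m n ℝ) :=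
  show MeasurableSpace (m → n → ℝ) from inferInstance

/-- `μ` is the Haar probability measure on the group `O(n)` of `n × n` real orthogonal
matrices: it is a probability measure, it is supported on orthogonal matrices, and it is
invariant under (left) translation by any orthogonal matrix. -/
def IsHaarO (n : ℕ) (μ : Measure (Matrix (Fin n) (Fin n) ℝ)) : Prop :=
  IsProbabilityMeasure μ ∧
  (∀ᵐ M ∂μ, Mᵀ * M = 1) ∧
  ∀ Q : Matrix (Fin n) (Fin n) ℝ, Qᵀ * Q = 1 → μ.map (fun M => Q * M) = μ

/-- `μ` is the Haar probability measure on `SO(n)`: a probability measure supported on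
orthogonal matrices of determinant one, invariant under left translation by `SO(n)`. -/
def IsHaarSO (n : ℕ) (μ : Measure (Matrix (Fin n) (Fin n) ℝ)) : Prop :=
  IsProbabilityMeasure μ ∧
  (∀ᵐ M ∂μ, Mᵀ * M = 1 ∧ M.det = 1) ∧
  ∀ Q : Matrix (Fin n) (Fin n) ℝ, Qᵀ * Q = 1 → Q.det = 1 →
    μ.map (fun M => Q * M) = μ

/-- The map taking an `n × n` matrix to `√(n/k)` times its top-left `m × k` submatrix. -/
def suoOfHaar {m k n : ℕ} (hm : m ≤ n) (hk : k ≤ n)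
    (M : Matrix (Fin n) (Fin n) ℝ) : Matrix (Fin m) (Fin k) ℝ :=
  Real.sqrt ((n : ℝ) / (k : ℝ)) • M.submatrix (Fin.castLE hm) (Fin.castLE hk)

/-- `ν` is the scaled-corrected uniform orthogonal (SUO) distribution on `m × k` matrices:
the law of `√(n/k) • W₀` where `n = max k m` and `W₀` is the top-left `m × k` submatrix of
a Haar-distributed `n × n` orthogonal matrix. -/
def IsSUO (m k : ℕ) (ν : Measure (Matrix (Fin m) (Fin k) ℝ)) : Prop :=
  ∃ μ : Measure (Matrix (Fin (max k m)) (Fin (max k m)) ℝ),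
    IsHaarO (max k m) μ ∧
    ν = μ.map (suoOfHaar (le_max_right k m) (le_max_left k m))

/-- The kernel function `κ_f(z, z') = (1/m) f(z)ᵀ f(z')` of the combined layer
`f(z) = φ(W z)`, with `φ` applied elementwise. -/
def kernelF {m k : ℕ} (φ : ℝ → ℝ) (W : Matrix (Fin m) (Fin k) ℝ)
    (z z' : Fin k → ℝ) : ℝ :=
  (∑ i, φ (W.mulVec z i) * φ (W.mulVec z' i)) / (m : ℝ)

/-- The input covariance matrix `Σ_{z,z'} = (1/k) [[zᵀz, zᵀz'], [z'ᵀz, z'ᵀz']]`. -/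
def covMat {k : ℕ} (z z' : Fin k → ℝ) : Matrix (Fin 2) (Fin 2) ℝ :=
  (k : ℝ)⁻¹ • !![z ⬝ᵥ z, z ⬝ᵥ z'; z' ⬝ᵥ z, z' ⬝ᵥ z']

/-- The approximate kernel function `κ̃_f(Σ) = E_{u ∼ N(0, Σ)}[φ(u₁) φ(u₂)]`, realized by
pushing a pair of independent standard Gaussians through the Cholesky factor of `Σ`. -/
def approxKernel (φ : ℝ → ℝ) (S : Matrix (Fin 2) (Fin 2) ℝ) : ℝ :=
  ∫ p : ℝ × ℝ,
      φ (Real.sqrt (S 0 0) * p.1) *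
      φ ((S 1 0 / Real.sqrt (S 0 0)) * p.1 +
          Real.sqrt (S 1 1 - (S 1 0) ^ 2 / S 0 0) * p.2)
    ∂((gaussianReal 0 1).prod (gaussianReal 0 1))

/-- `γ` is the law of a centered (jointly) Gaussian random vector indexed by `ι` with
covariance matrix `A`: every linear functional of it is a centered real Gaussian with the
corresponding variance. -/
def IsGaussianLaw {ι : Type*} [Fintype ι] (A : Matrix ι ι ℝ)
    (γ : Measure (ι → ℝ)) : Prop :=
  IsProbabilityMeasure γ ∧
  ∀ l : ι → ℝ,
    γ.map (fun y => ∑ i, l i * y i) =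
      gaussianReal 0 (Real.toNNReal (∑ i, ∑ j, l i * A i j * l j))

/-- The Frobenius (Hilbert–Schmidt) norm of a matrix. -/
def frobNorm {m n : ℕ} (M : Matrix (Fin m) (Fin n) ℝ) : ℝ :=
  Real.sqrt (∑ i, ∑ j, (M i j) ^ 2)

/-- The `ℓ²` operator norm of a square matrix. -/
def opNorm {d : ℕ} (A : Matrix (Fin d) (Fin d) ℝ) : ℝ :=
  ‖Matrix.toEuclideanCLM (𝕜 := ℝ) A‖

end


noncomputable section SOProof

abbrev PolyR (n : ℕ) := MvPolynomial (Fin n × Fin n) ℝ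

def evP {n : ℕ} (M : Matrix (Fin n) (Fin n) ℝ) : PolyR n →ₐ[ℝ] ℝ :=
  MvPolynomial.aeval (fun p => M p.1 p.2)

def XF {n : ℕ} (A : Matrix (Fin n) (Fin n) ℝ) : Derivation ℝ (PolyR n) (PolyR n) :=
  MvPolynomial.mkDerivation ℝ (fun p => ∑ k, A p.1 k • MvPolynomial.X (k, p.2))

lemma XF_X {n : ℕ} (A : Matrix (Fin n) (Fin n) ℝ) (i j : Fin n) :
    XF A (MvPolynomial.X (i, j)) = ∑ k, A i k • MvPolynomial.X (k, j) := by
  simp [XF, MvPolynomial.mkDerivation_X]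

lemma XF_add {n : ℕ} (A B : Matrix (Fin n) (Fin n) ℝ) : XF (A + B) = XF A + XF B := by
  apply MvPolynomial.derivation_ext
  rintro ⟨i, j⟩
  simp [XF_X, add_smul, Finset.sum_add_distrib]

lemma XF_smul {n : ℕ} (c : ℝ) (A : Matrix (Fin n) (Fin n) ℝ) : XF (c • A) = c • XF A := by
  apply MvPolynomial.derivation_ext
  rintro ⟨i, j⟩
  simp [XF_X, mul_smul, Finset.smul_sum]

def XL (n : ℕ) : Matrix (Fin n) (Fin n) ℝ →ₗ[ℝ] Derivation ℝ (PolyR n) (PolyR n) where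
  toFun := XF
  map_add' := XF_add
  map_smul' := XF_smul

lemma XF_comm {n : ℕ} (A B : Matrix (Fin n) (Fin n) ℝ) (p : PolyR n) :
    XF A (XF B p) - XF B (XF A p) = XF (B * A - A * B) p := by
  have : ⁅XF A, XF B⁆ = XF (B * A - A * B) := by
    apply MvPolynomial.derivation_ext
    rintro ⟨i, j⟩
    rw [Derivation.commutator_apply]
    simp only [XF_X, map_sum, Derivation.map_smul, Finset.smul_sum, smul_smul, Matrix.sub_apply,
      Matrix.mul_apply, sub_smul, Finset.sum_sub_distrib, Finset.sum_smul]
    congr 1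
    · rw [Finset.sum_comm]
    · rw [Finset.sum_comm]
  rw [← this, Derivation.commutator_apply]

/-- skew generator -/
def EE {n : ℕ} (i j : Fin n) : Matrix (Fin n) (Fin n) ℝ := Matrix.single i j 1 - Matrix.single j i 1

lemma EE_swap {n : ℕ} (i j : Fin n) : EE j i = - EE i j := by simp [EE]

lemma EE_transpose {n : ℕ} (i j : Fin n) : (EE i j)ᵀ = - EE i j := by simp [EE]

def XX {n : ℕ} (i j : Fin n) : PolyR n →ₗ[ℝ] PolyR n := (XF (EE i j)).toLinearMap

lemma XX_apply {n : ℕ} (i j : Fin n) (p : PolyR n) : XX i j p = XF (EE i j) p := rfl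

lemma XX_swap {n : ℕ} (i j : Fin n) (p : PolyR n) : XX j i p = - XX i j p := by
  have : XF (EE j i) = (-1 : ℝ) • XF (EE i j) := by rw [← XF_smul, EE_swap]; simp
  simp [XX, this]

lemma single_mul_single_ite {n : ℕ} (i j k l : Fin n) :
    (Matrix.single i j (1:ℝ)) * (Matrix.single k l 1) =
      (if j = k then (1:ℝ) else 0) • Matrix.single i l 1 := by
  split_ifs with h
  · subst h; simp
  · simp [h]

lemma EE_comm {n : ℕ} (i j k l : Fin n) : EE k l * EE i j - EE i j * EE k l =
    (-(if j = k then (1:ℝ) else 0)) • EE i l + (if i = k then (1:ℝ) else 0) • EE j l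
      + (if j = l then (1:ℝ) else 0) • EE i k - (if i = l then (1:ℝ) else 0) • EE j k := by
  simp only [EE, sub_mul, mul_sub, single_mul_single_ite, eq_comm (a := k), eq_comm (a := l)]
  module

lemma XX_comm {n : ℕ} (i j k l : Fin n) (p : PolyR n) :
    XX i j (XX k l p) - XX k l (XX i j p) =
    (-(if j = k then (1:ℝ) else 0)) • XX i l p + (if i = k then (1:ℝ) else 0) • XX j l p
      + (if j = l then (1:ℝ) else 0) • XX i k p - (if i = l then (1:ℝ) else 0) • XX j k p := by
  have := XF_comm (EE i j) (EE k l) p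
  rw [EE_comm] at this
  have h2 : ∀ B : Matrix (Fin n) (Fin n) ℝ, XF B = XL n B := fun _ => rfl
  simp only [XX_apply]
  rw [this]
  simp only [h2, map_add, map_sub, map_smul, Derivation.add_apply, Derivation.sub_apply,
    Derivation.smul_apply]

def Lap (n : ℕ) : PolyR n →ₗ[ℝ] PolyR n := ∑ i, ∑ j, XX i j ∘ₗ XX i j

lemma Lap_apply {n : ℕ} (p : PolyR n) : Lap n p = ∑ i, ∑ j, XX i j (XX i j p) := by
  simp [Lap]

lemma Lap_comm {n : ℕ} (k l : Fin n) (p : PolyR n) : Lap n (XX k l p) = XX k l (Lap n p) := by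
  have key : ∀ i j : Fin n, XX i j (XX i j (XX k l p)) - XX k l (XX i j (XX i j p)) =
      XX i j ((-(if j = k then (1:ℝ) else 0)) • XX i l p + (if i = k then (1:ℝ) else 0) • XX j l p
      + (if j = l then (1:ℝ) else 0) • XX i k p - (if i = l then (1:ℝ) else 0) • XX j k p)
      + ((-(if j = k then (1:ℝ) else 0)) • XX i l (XX i j p)
      + (if i = k then (1:ℝ) else 0) • XX j l (XX i j p)
      + (if j = l then (1:ℝ) else 0) • XX i k (XX i j p)
      - (if i = l then (1:ℝ) else 0) • XX j k (XX i j p)) := by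
    intro i j
    rw [← XX_comm, ← XX_comm, map_sub]
    abel
  rw [← sub_eq_zero, Lap_apply, Lap_apply]
  simp only [map_sum]
  simp only [← Finset.sum_sub_distrib, key]
  simp only [map_add, map_sub, map_smul]
  simp only [Finset.sum_add_distrib, Finset.sum_sub_distrib, ite_smul,
    neg_smul, one_smul, zero_smul, Finset.sum_neg_distrib]
  have e1 : ∀ (c : Fin n) (f : Fin n → Fin n → PolyR n),
      ∑ x, ∑ y, (if x = c then f x y else 0) = ∑ y, f c y := by
    intro c f
    rw [Finset.sum_comm]
    simp
  simp only [e1, Finset.sum_ite_eq', Finset.mem_univ, if_true]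
  have s1 : ∀ x, XX k x (XX x l p) = - XX x k (XX x l p) := fun x => XX_swap _ _ _
  have s2 : ∀ x, XX l x (XX x k p) = - XX x l (XX x k p) := fun x => XX_swap _ _ _
  have s3 : ∀ x, XX x l (XX k x p) = - XX x l (XX x k p) := fun x => by
    rw [XX_swap x k, map_neg]
  have s4 : ∀ x, XX x k (XX l x p) = - XX x k (XX x l p) := fun x => by
    rw [XX_swap x l, map_neg]
  simp only [s1, s2, s3, s4, Finset.sum_neg_distrib]
  abel

lemma ite_sum_sq {n : ℕ} (x : Fin n → Fin n → ℝ) (hx : ∀ i j, x j i = - x i j) :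
    ∑ i, ∑ j, ∑ k, ∑ l, (-(if j = k then (1:ℝ) else 0) * x i l + (if i = k then (1:ℝ) else 0) * x j l
      + (if j = l then (1:ℝ) else 0) * x i k - (if i = l then (1:ℝ) else 0) * x j k) ^ 2
    = 4 * ((n : ℝ) - 2) * ∑ i, ∑ j, x i j ^ 2 := by
  have h0 : ∀ i, x i i = 0 := fun i => by have := hx i i; linarith
  have expand : ∀ i j k l : Fin n, (-(if j = k then (1:ℝ) else 0) * x i l
      + (if i = k then (1:ℝ) else 0) * x j l
      + (if j = l then (1:ℝ) else 0) * x i k - (if i = l then (1:ℝ) else 0) * x j k) ^ 2 =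
      (if j = k then x i l ^ 2 else 0) + (if i = k then x j l ^ 2 else 0)
      + (if j = l then x i k ^ 2 else 0) + (if i = l then x j k ^ 2 else 0)
      - 2 * (if j = k then (if i = j then x i l ^ 2 else 0) else 0)
      - 2 * (if j = k then (if j = l then x i k ^ 2 else 0) else 0)
      - 2 * (if i = k then (if i = l then x j k ^ 2 else 0) else 0)
      - 2 * (if j = l then (if i = j then x j k ^ 2 else 0) else 0) := by
    intro i j k l
    by_cases h1 : j = k
    · by_cases h2 : j = l
      · subst h1; subst h2
        by_cases h3 : i = j
        · subst h3; simp [h0]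
        · simp [h3]; ring
      · subst h1
        by_cases h3 : i = j
        · subst h3; simp [h2]; ring
        · by_cases h4 : i = l
          · subst h4; simp [h3, h2, h0]
          · simp [h3, h4, h2]
    · by_cases h2 : j = l
      · subst h2
        by_cases h3 : i = j
        · subst h3; simp [h1]; ring
        · by_cases h4 : i = k
          · subst h4; simp [h3, h1, h0]
          · simp [h3, h4, h1]
      · by_cases h3 : i = k
        · by_cases h4 : i = l
          · subst h3; subst h4; simp [h1]; ring
          · subst h3; simp [h1, h2, h4]
        · by_cases h4 : i = l
          · subst h4; simp [h1, h2, h3]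
          · simp [h1, h2, h3, h4]
  have e1 : ∀ (c : Fin n) (f : Fin n → Fin n → ℝ),
      ∑ a, ∑ b, (if c = a then f a b else 0) = ∑ b, f c b := by
    intro c f
    rw [Finset.sum_comm]
    simp
  simp only [expand, Finset.sum_add_distrib, Finset.sum_sub_distrib, ← Finset.mul_sum, e1,
    Finset.sum_ite_eq, Finset.mem_univ, if_true]
  have t : ∑ i, ∑ j, x j i ^ 2 = ∑ i, ∑ j, x i j ^ 2 := Finset.sum_comm
  have e3 : ∑ i : Fin n, ∑ _j : Fin n, ∑ l, x i l ^ 2 = n * ∑ i, ∑ j, x i j ^ 2 := by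
    simp [Finset.mul_sum]
  have e4 : ∑ _i : Fin n, ∑ j, ∑ l, x j l ^ 2 = n * ∑ i, ∑ j, x i j ^ 2 := by
    simp
  have e5 : ∑ i, ∑ j, ∑ l, (if i = j then x i l ^ 2 else 0) = ∑ i, ∑ j, x i j ^ 2 := by
    refine Finset.sum_congr rfl fun i _ => ?_
    rw [e1 i (fun _ l => x i l ^ 2)]
  have e6 : ∑ i, ∑ j, ∑ l, (if i = j then x j l ^ 2 else 0) = ∑ i, ∑ j, x i j ^ 2 := by
    refine Finset.sum_congr rfl fun i _ => ?_
    rw [e1 i (fun j l => x j l ^ 2)]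
  simp only [e3, e4, e5, e6, t]
  ring

/-- squared gradient -/
def GG {n : ℕ} (p : PolyR n) : PolyR n := ∑ i, ∑ j, (XX i j p) ^ 2

lemma XX_sq {n : ℕ} (i j : Fin n) (q : PolyR n) :
    XX i j (XX i j (q ^ 2)) = 2 * (q * XX i j (XX i j q)) + 2 * (XX i j q) ^ 2 := by
  simp only [XX_apply, sq, Derivation.leibniz,
    smul_eq_mul, map_add]
  ring

lemma bochner {n : ℕ} (p : PolyR n) (M : Matrix (Fin n) (Fin n) ℝ) :
    evP M (∑ i, ∑ j, 2 * (XX i j p * XX i j (Lap n p))) ≤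
      evP M (Lap n (GG p)) - 2 * ((n : ℝ) - 2) * evP M (GG p) := by
  have h1 : Lap n (GG p) = ∑ k, ∑ l, 2 * (XX k l p * XX k l (Lap n p)) +
      2 * ∑ k, ∑ l, ∑ i, ∑ j, (XX i j (XX k l p)) ^ 2 := by
    have : ∀ q : PolyR n, Lap n (q ^ 2) = 2 * (q * Lap n q) + 2 * ∑ i, ∑ j, (XX i j q) ^ 2 := by
      intro q
      simp only [Lap_apply, XX_sq, Finset.sum_add_distrib, Finset.mul_sum]
    simp only [GG, map_sum, this, Lap_comm, Finset.sum_add_distrib, Finset.mul_sum]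
  have h2 : ((n : ℝ) - 2) * evP M (GG p) ≤
      evP M (∑ k, ∑ l, ∑ i, ∑ j, (XX i j (XX k l p)) ^ 2) := by
    have h3 := ite_sum_sq (fun i j => evP M (XX i j p)) (fun i j => by simp [XX_swap i j])
    have h4 : ∀ i j k l : Fin n, (-(if j = k then (1:ℝ) else 0) * evP M (XX i l p)
      + (if i = k then (1:ℝ) else 0) * evP M (XX j l p)
      + (if j = l then (1:ℝ) else 0) * evP M (XX i k p)
      - (if i = l then (1:ℝ) else 0) * evP M (XX j k p)) =
      evP M (XX i j (XX k l p)) - evP M (XX k l (XX i j p)) := by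
      intro i j k l
      rw [← map_sub, XX_comm]
      simp only [map_add, map_sub, map_smul, smul_eq_mul]
    simp only [h4] at h3
    have h5 : ∑ i : Fin n, ∑ j : Fin n, ∑ k : Fin n, ∑ l : Fin n,
        (evP M (XX i j (XX k l p)) - evP M (XX k l (XX i j p))) ^ 2 ≤
        ∑ i, ∑ j, ∑ k, ∑ l, (2 * (evP M (XX i j (XX k l p))) ^ 2
          + 2 * (evP M (XX k l (XX i j p))) ^ 2) := by
      gcongr with i _ j _ k _ l _
      nlinarith [sq_nonneg (evP M (XX i j (XX k l p)) + evP M (XX k l (XX i j p)))]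
    have h6 : ∑ i : Fin n, ∑ j : Fin n, ∑ k : Fin n, ∑ l : Fin n, (evP M (XX i j (XX k l p))) ^ 2
        = ∑ k : Fin n, ∑ l : Fin n, ∑ i : Fin n, ∑ j : Fin n, (evP M (XX i j (XX k l p))) ^ 2 := by
      have := Finset.sum_comm (s := (Finset.univ : Finset (Fin n × Fin n)))
        (t := (Finset.univ : Finset (Fin n × Fin n)))
        (f := fun a b => (evP M (XX a.1 a.2 (XX b.1 b.2 p))) ^ 2)
      simpa only [Fintype.sum_prod_type] using this
    simp only [Finset.sum_add_distrib, ← Finset.mul_sum] at h5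
    simp only [GG, map_sum, map_pow] at *
    rw [h6] at h5
    linarith
  rw [h1]
  simp only [map_add, map_mul, map_ofNat]
  simp only [map_mul, map_ofNat, map_sum] at *
  linarith

end SOProof

noncomputable section SOProof2

def SOset (n : ℕ) : Set (Matrix (Fin n) (Fin n) ℝ) := {M | Mᵀ * M = 1 ∧ M.det = 1}

lemma one_mem_SO (n : ℕ) : (1 : Matrix (Fin n) (Fin n) ℝ) ∈ SOset n := by simp [SOset]

lemma mul_mem_SO {n : ℕ} {A B : Matrix (Fin n) (Fin n) ℝ} (hA : A ∈ SOset n) (hB : B ∈ SOset n) :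
    A * B ∈ SOset n := by
  refine ⟨?_, by rw [Matrix.det_mul, hA.2, hB.2, one_mul]⟩
  rw [Matrix.transpose_mul, Matrix.mul_assoc, ← Matrix.mul_assoc Aᵀ, hA.1, Matrix.one_mul, hB.1]

lemma SO_mul_transpose {n : ℕ} {A : Matrix (Fin n) (Fin n) ℝ} (hA : A ∈ SOset n) :
    A * Aᵀ = 1 := mul_eq_one_comm.mp hA.1

lemma transpose_mem_SO {n : ℕ} {A : Matrix (Fin n) (Fin n) ℝ} (hA : A ∈ SOset n) :
    Aᵀ ∈ SOset n :=
  ⟨by rw [Matrix.transpose_transpose]; exact SO_mul_transpose hA, by rw [Matrix.det_transpose, hA.2]⟩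

lemma SO_row_sum {n : ℕ} {A : Matrix (Fin n) (Fin n) ℝ} (hA : A ∈ SOset n) (j : Fin n) :
    ∑ i, A i j ^ 2 = 1 := by
  have := congrFun (congrFun hA.1 j) j
  simpa [Matrix.mul_apply, sq] using this

lemma SO_entry {n : ℕ} {A : Matrix (Fin n) (Fin n) ℝ} (hA : A ∈ SOset n) (i j : Fin n) :
    |A i j| ≤ 1 := by
  rw [← sq_le_one_iff_abs_le_one, ← SO_row_sum hA j]
  exact Finset.single_le_sum (f := fun i => A i j ^ 2) (fun _ _ => sq_nonneg _) (Finset.mem_univ i)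

lemma isClosed_SO (n : ℕ) : IsClosed (SOset n) := by
  apply IsClosed.inter
  · exact isClosed_eq (by fun_prop) continuous_const
  · exact isClosed_eq (by fun_prop) continuous_const

lemma isCompact_SO (n : ℕ) : IsCompact (SOset n) := by
  have h1 : IsCompact (Set.univ.pi fun _ : Fin n => Set.univ.pi fun _ : Fin n => Set.Icc (-1:ℝ) 1) :=
    isCompact_univ_pi fun _ => isCompact_univ_pi fun _ => isCompact_Icc
  refine IsCompact.of_isClosed_subset h1 (isClosed_SO n) ?_
  intro M hM i _ j _
  exact abs_le.mp (SO_entry hM i j)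

lemma exp_mem_SO {n : ℕ} {A : Matrix (Fin n) (Fin n) ℝ} (hA : Aᵀ = -A) (t : ℝ) :
    NormedSpace.exp (t • A) ∈ SOset n := by
  have orth : ∀ t : ℝ, (NormedSpace.exp (t • A))ᵀ * NormedSpace.exp (t • A) = 1 := by
    intro t
    rw [← Matrix.exp_transpose, Matrix.transpose_smul, hA, smul_neg, Matrix.exp_neg]
    exact Matrix.nonsing_inv_mul _ ((Matrix.isUnit_iff_isUnit_det _).mp (Matrix.isUnit_exp _))
  refine ⟨orth t, ?_⟩
  have h2 : NormedSpace.exp (t • A) = NormedSpace.exp ((t/2) • A) * NormedSpace.exp ((t/2) • A) := by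
    rw [← Matrix.exp_add_of_commute _ _ (Commute.refl _), ← add_smul, add_halves]
  have h3 := congrArg Matrix.det (orth (t/2))
  rw [Matrix.det_mul, Matrix.det_transpose, Matrix.det_one] at h3
  rw [h2, Matrix.det_mul, h3]

section
attribute [local instance] Matrix.linftyOpNormedRing Matrix.linftyOpNormedAlgebra

lemma hasDerivAt_exp_entry {n : ℕ} (A M : Matrix (Fin n) (Fin n) ℝ) (t : ℝ) (i j : Fin n) :
    HasDerivAt (fun s : ℝ => (NormedSpace.exp (s • A) * M) i j)
      ((A * (NormedSpace.exp (t • A) * M)) i j) t := by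
  have h := hasDerivAt_exp_smul_const' (𝕂 := ℝ) A t
  let ℓ : Matrix (Fin n) (Fin n) ℝ →ₗ[ℝ] ℝ :=
    { toFun := fun B => (B * M) i j
      map_add' := by intros; simp [add_mul]
      map_smul' := by intros; simp }
  have h2 := (LinearMap.toContinuousLinearMap ℓ).hasFDerivAt.comp_hasDerivAt t h
  have h3 : (LinearMap.toContinuousLinearMap ℓ) (A * NormedSpace.exp (t • A)) =
    ((A * (NormedSpace.exp (t • A) * M)) i j) := by
    simp [ℓ, Matrix.mul_assoc]
  exact h2.congr_deriv h3
end

lemma evP_X {n : ℕ} (M : Matrix (Fin n) (Fin n) ℝ) (i j : Fin n) :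
    evP M (MvPolynomial.X (i, j)) = M i j := by simp [evP]

lemma continuous_evP {n : ℕ} (p : PolyR n) : Continuous fun M => evP M p := by
  induction p using MvPolynomial.induction_on with
  | C a => simpa [evP] using continuous_const
  | add p q hp hq => simp only [map_add]; exact hp.add hq
  | mul_X p x hp =>
    obtain ⟨i, j⟩ := x
    simp only [map_mul, evP_X]
    exact hp.mul (by fun_prop)

lemma hasDerivAt_evP {n : ℕ} (A M : Matrix (Fin n) (Fin n) ℝ) (p : PolyR n) (t : ℝ) :
    HasDerivAt (fun s : ℝ => evP (NormedSpace.exp (s • A) * M) p)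
      (evP (NormedSpace.exp (t • A) * M) (XF A p)) t := by
  induction p using MvPolynomial.induction_on with
  | C a =>
    have : XF A (MvPolynomial.C a) = 0 := (XF A).map_algebraMap a
    rw [this]
    simpa [evP] using hasDerivAt_const t a
  | add p q hp hq =>
    simp only [map_add]; exact hp.add hq
  | mul_X p x hp =>
    obtain ⟨i, j⟩ := x
    have h1 := hp.mul (hasDerivAt_exp_entry A M t i j)
    simp only [map_mul, evP_X, Derivation.leibniz, map_add, smul_eq_mul, XF_X, map_sum, map_smul]
    refine h1.congr_deriv ?_
    rw [Matrix.mul_apply (M := A)]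
    ring

/-- second derivative test along one-parameter subgroups -/
lemma max_conditions {n : ℕ} {A M : Matrix (Fin n) (Fin n) ℝ} (p : PolyR n)
    (hmax : ∀ t : ℝ, evP (NormedSpace.exp (t • A) * M) p ≤ evP M p) :
    evP M (XF A p) = 0 ∧ evP M (XF A (XF A p)) ≤ 0 := by
  have e0 : NormedSpace.exp ((0:ℝ) • A) * M = M := by simp
  have d1 := fun t => hasDerivAt_evP A M p t
  have d2 := hasDerivAt_evP A M (XF A p) 0
  have hlm : IsLocalMax (fun s : ℝ => evP (NormedSpace.exp (s • A) * M) p) 0 := by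
    refine Filter.Eventually.of_forall fun t => ?_
    simpa only [e0] using hmax t
  have h1 : evP M (XF A p) = 0 := by
    have := hlm.hasDerivAt_eq_zero (d1 0)
    rwa [e0] at this
  refine ⟨h1, ?_⟩
  by_contra hpos
  push Not at hpos
  have hderiv : deriv (fun s : ℝ => evP (NormedSpace.exp (s • A) * M) p) =
      fun s => evP (NormedSpace.exp (s • A) * M) (XF A p) := funext fun t => (d1 t).deriv
  have hmin : IsLocalMin (fun s : ℝ => evP (NormedSpace.exp (s • A) * M) p) 0 := by
    apply isLocalMin_of_deriv_deriv_pos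
    · rw [hderiv, d2.deriv, e0]; exact hpos
    · rw [hderiv]; simpa only [e0] using h1
    · exact (d1 0).continuousAt
  -- locally constant, contradiction
  have hconst : (fun s : ℝ => evP (NormedSpace.exp (s • A) * M) p) =ᶠ[nhds 0] fun _ => evP M p := by
    filter_upwards [hmin, hlm] with t h1 h2
    simp only [e0] at h1 h2
    exact le_antisymm h2 h1
  have h3 := hconst.deriv.deriv_eq
  rw [hderiv, d2.deriv, e0] at h3
  simp at h3
  linarith

/-- every polynomial lies in a finite-dimensional subspace invariant under all the fields -/
lemma exists_inv {n : ℕ} (p : PolyR n) : ∃ V : Submodule ℝ (PolyR n), V.FG ∧ p ∈ V ∧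
    ∀ A, ∀ q ∈ V, XF A q ∈ V := by
  set S : Submodule ℝ (PolyR n) :=
    Submodule.span ℝ (insert 1 (Set.range (fun x : Fin n × Fin n => MvPolynomial.X x))) with hS
  have S1 : (1 : PolyR n) ∈ S := Submodule.subset_span (by simp)
  have SX : ∀ x, (MvPolynomial.X x : PolyR n) ∈ S := fun x => Submodule.subset_span (by simp)
  have hle : (1 : Submodule ℝ (PolyR n)) ≤ S := Submodule.one_le.mpr S1
  have Sfg : S.FG := Submodule.fg_span ((Set.finite_range _).insert _)
  have Sinv : ∀ A, ∀ q ∈ S, XF A q ∈ S := by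
    intro A q hq
    induction hq using Submodule.span_induction with
    | mem x hx =>
      rcases hx with rfl | ⟨⟨i, j⟩, rfl⟩
      · simp
      · simp only [XF_X]
        exact S.sum_mem fun k _ => S.smul_mem _ (SX _)
    | zero => simp
    | add x y _ _ hx hy => rw [map_add]; exact S.add_mem hx hy
    | smul a x _ hx => rw [Derivation.map_smul]; exact S.smul_mem _ hx
  have Pinv : ∀ d : ℕ, ∀ A, ∀ q ∈ S ^ d, XF A q ∈ S ^ d := by
    intro d A
    induction d with
    | zero =>
      intro q hq
      rw [pow_zero, Submodule.mem_one] at hq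
      obtain ⟨y, rfl⟩ := hq
      rw [(XF A).map_algebraMap]
      exact Submodule.zero_mem _
    | succ d ih =>
      intro q hq
      rw [pow_succ] at hq ⊢
      induction hq using Submodule.mul_induction_on' with
      | mem_mul_mem a ha b hb =>
        rw [Derivation.leibniz, smul_eq_mul, smul_eq_mul, mul_comm b]
        exact Submodule.add_mem _ (Submodule.mul_mem_mul ha (Sinv A b hb))
          (Submodule.mul_mem_mul (ih a ha) hb)
      | add x _ y _ hx hy => rw [map_add]; exact Submodule.add_mem _ hx hy
  have mono : ∀ {a b : ℕ}, a ≤ b → S ^ a ≤ S ^ b := fun h => pow_le_pow_right₀ hle h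
  have ex : ∃ d : ℕ, p ∈ S ^ d := by
    induction p using MvPolynomial.induction_on with
    | C a => exact ⟨0, by rw [pow_zero, Submodule.mem_one]; exact ⟨a, rfl⟩⟩
    | add p q hp hq =>
      obtain ⟨a, ha⟩ := hp
      obtain ⟨b, hb⟩ := hq
      exact ⟨max a b, Submodule.add_mem _ (mono (le_max_left _ _) ha) (mono (le_max_right _ _) hb)⟩
    | mul_X p x hp =>
      obtain ⟨a, ha⟩ := hp
      exact ⟨a + 1, by rw [pow_succ]; exact Submodule.mul_mem_mul ha (SX x)⟩
  obtain ⟨d, hd⟩ := ex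
  exact ⟨S ^ d, Sfg.pow d, hd, Pinv d⟩

/-- linear flow on a finite-dimensional space -/
lemma exists_flow {V : Type*} [AddCommGroup V] [Module ℝ V] [FiniteDimensional ℝ V]
    (D : V →ₗ[ℝ] V) (v : V) : ∃ u : ℝ → V, u 0 = v ∧
      ∀ ℓ : V →ₗ[ℝ] ℝ, ∀ s, HasDerivAt (fun s => ℓ (u s)) (ℓ (D (u s))) s := by
  let b := (Module.finBasis ℝ V).equivFun
  let D' : (Fin (Module.finrank ℝ V) → ℝ) →L[ℝ] (Fin (Module.finrank ℝ V) → ℝ) :=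
    LinearMap.toContinuousLinearMap (b.toLinearMap ∘ₗ D ∘ₗ b.symm.toLinearMap)
  refine ⟨fun s => b.symm (NormedSpace.exp (s • D') (b v)), by simp, ?_⟩
  intro ℓ s
  have h := hasDerivAt_exp_smul_const' (𝕂 := ℝ) D' s
  have h2 := h.clm_apply (hasDerivAt_const s (b v))
  have h3 := (LinearMap.toContinuousLinearMap
    (ℓ ∘ₗ b.symm.toLinearMap)).hasFDerivAt.comp_hasDerivAt s h2
  refine h3.congr_deriv ?_
  simp [D']

end SOProof2

noncomputable section SOProof3

lemma max_principle {X : Type*} [TopologicalSpace X] {K : Set X} (hK : IsCompact K)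
    (g g' : ℝ → X → ℝ) (c B : ℝ) (hcont : Continuous (fun p : ℝ × X => g p.1 p.2))
    (hd : ∀ s, ∀ x ∈ K, HasDerivAt (fun s => g s x) (g' s x) s)
    (hmax : ∀ s, ∀ x ∈ K, (∀ y ∈ K, g s y ≤ g s x) → g' s x ≤ -c * g s x)
    (h0 : ∀ x ∈ K, g 0 x ≤ B) :
    ∀ s, 0 ≤ s → ∀ x ∈ K, g s x ≤ Real.exp (-c * s) * B := by
  intro s₁ hs₁ x₁ hx₁
  suffices h : Real.exp (c * s₁) * g s₁ x₁ ≤ B by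
    have h2 := mul_le_mul_of_nonneg_left h (Real.exp_pos (-c * s₁)).le
    rw [← mul_assoc, ← Real.exp_add] at h2
    simpa using h2
  refine le_of_forall_pos_le_add fun δ hδ => ?_
  obtain ⟨ε, hε, hεδ⟩ : ∃ ε : ℝ, 0 < ε ∧ ε * s₁ ≤ δ := by
    refine ⟨δ / (s₁ + 1), by positivity, ?_⟩
    rw [div_mul_eq_mul_div, div_le_iff₀ (by positivity)]
    nlinarith
  have hcomp : IsCompact (Set.Icc 0 s₁ ×ˢ K) := isCompact_Icc.prod hK
  obtain ⟨⟨s, x⟩, ⟨hs, hx⟩, hm⟩ := hcomp.exists_isMaxOn ⟨(s₁, x₁), ⟨hs₁, le_refl _⟩, hx₁⟩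
    (f := fun p : ℝ × X => Real.exp (c * p.1) * g p.1 p.2 - ε * p.1) (by fun_prop)
  simp only at hs hx
  have hm' : ∀ s' ∈ Set.Icc 0 s₁, ∀ x' ∈ K,
      Real.exp (c * s') * g s' x' - ε * s' ≤ Real.exp (c * s) * g s x - ε * s :=
    fun s' hs' x' hx' => hm (a := (s', x')) ⟨hs', hx'⟩
  have hfin := hm' s₁ ⟨hs₁, le_refl _⟩ x₁ hx₁
  rcases eq_or_lt_of_le hs.1 with h | h
  · have := h0 x hx
    rw [← h] at hfin
    simp at hfin
    linarith
  · exfalso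
    have hsp : ∀ y ∈ K, g s y ≤ g s x := by
      intro y hy
      have := hm' s hs y hy
      exact le_of_mul_le_mul_left (by linarith) (Real.exp_pos (c * s))
    have hg' := hmax s x hx hsp
    have e1 : HasDerivAt (fun s => Real.exp (c * s)) (Real.exp (c * s) * c) s := by
      simpa using ((hasDerivAt_id s).const_mul c).exp
    have hder : HasDerivAt (fun s => Real.exp (c * s) * g s x - ε * s)
        (Real.exp (c * s) * c * g s x + Real.exp (c * s) * g' s x - ε) s := by
      have e2 := (e1.mul (hd s x hx)).sub ((hasDerivAt_id s).const_mul ε)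
      exact e2.congr_deriv (by simp)
    have hneg : Real.exp (c * s) * c * g s x + Real.exp (c * s) * g' s x - ε < 0 := by
      have := mul_le_mul_of_nonneg_left hg' (Real.exp_pos (c * s)).le
      linarith
    -- function is locally decreasing, contradiction with the maximum from the left
    have hev := (hasDerivAt_iff_tendsto_slope.mp hder).eventually (gt_mem_nhds hneg)
    have hleft : ∀ᶠ t in nhdsWithin s (Set.Iio s), t ∈ Set.Ioo 0 s := Ioo_mem_nhdsLT h
    have hev2 := hev.filter_mono (nhdsWithin_mono s (fun t ht => ne_of_lt ht) :
      nhdsWithin s (Set.Iio s) ≤ _)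
    obtain ⟨t, ht1, ht2⟩ := (hev2.and hleft).exists
    have h5 := hm' t ⟨ht2.1.le, ht2.2.le.trans hs.2⟩ x hx
    rw [slope_def_field] at ht1
    have h6 : 0 ≤ (Real.exp (c * t) * g t x - ε * t - (Real.exp (c * s) * g s x - ε * s)) / (t - s) :=
      div_nonneg_of_nonpos (by linarith) (by linarith [ht2.2])
    linarith

lemma evP_const_of_XF_zero {n : ℕ} {A M : Matrix (Fin n) (Fin n) ℝ} {p : PolyR n}
    (hM : M ∈ SOset n) (hA : Aᵀ = -A)
    (h : ∀ M ∈ SOset n, evP M (XF A p) = 0) (t : ℝ) :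
    evP (NormedSpace.exp (t • A) * M) p = evP M p := by
  have d : ∀ t, HasDerivAt (fun s : ℝ => evP (NormedSpace.exp (s • A) * M) p) 0 t := by
    intro t
    have := hasDerivAt_evP A M p t
    rwa [h _ (mul_mem_SO (exp_mem_SO hA t) hM)] at this
  have := is_const_of_deriv_eq_zero (fun t => (d t).differentiableAt) (fun t => (d t).deriv) t 0
  simpa using this

lemma eq_one_of_max {n : ℕ} {P : Matrix (Fin n) (Fin n) ℝ} (hP : P ∈ SOset n) (d : Fin n → ℝ)
    (hd : ∀ i, 0 < d i) (hinj : Function.Injective d)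
    (h1 : ∀ i j, P j i * d i = P i j * d j)
    (h2 : ∀ i j, i ≠ j → 0 ≤ P i i * d i + P j j * d j) : P = 1 := by
  have hsym : (P * diagonal d)ᵀ = P * diagonal d := by
    ext i j
    simp [Matrix.transpose_apply, Matrix.mul_diagonal, h1]
  have hsq : (P * diagonal d) * (P * diagonal d) = diagonal (fun i => d i * d i) := by
    nth_rewrite 1 [← hsym]
    rw [Matrix.transpose_mul, Matrix.mul_assoc, ← Matrix.mul_assoc Pᵀ, hP.1, Matrix.one_mul,
      Matrix.diagonal_transpose, Matrix.diagonal_mul_diagonal]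
  have hoff : ∀ i j, i ≠ j → P i j = 0 := by
    intro i j hij
    have h3 : (P * diagonal d) * diagonal (fun i => d i * d i) =
        diagonal (fun i => d i * d i) * (P * diagonal d) := by
      rw [← hsq]; simp only [Matrix.mul_assoc]
    have h4 := congrFun (congrFun h3 i) j
    rw [Matrix.mul_diagonal, Matrix.diagonal_mul, Matrix.mul_diagonal] at h4
    have h5 : P i j * (d j * ((d j - d i) * (d j + d i))) = 0 := by linear_combination h4
    have h6 : d j - d i ≠ 0 := sub_ne_zero.mpr fun h => hij (hinj h.symm)
    have h7 : d j + d i ≠ 0 := (add_pos (hd j) (hd i)).ne'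
    exact (mul_eq_zero.mp h5).resolve_right (mul_ne_zero (hd j).ne' (mul_ne_zero h6 h7))
  have hdiag : P = diagonal (fun i => P i i) := by
    ext i j
    by_cases h : i = j
    · subst h; simp
    · simp [h, hoff i j h]
  have hsqr : ∀ i, P i i = 1 ∨ P i i = -1 := by
    intro i
    have := SO_row_sum hP i
    rw [Finset.sum_eq_single i (fun j _ hj => by rw [hoff j i hj]; simp) (by simp)] at this
    rw [sq] at this; exact mul_self_eq_one_iff.mp this
  have hall : ∀ i, P i i = 1 := by
    intro i
    refine (hsqr i).resolve_right fun hi => ?_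
    have hoth : ∀ j, j ≠ i → P j j = 1 := by
      intro j hj
      refine (hsqr j).resolve_right fun hj' => ?_
      have := h2 i j hj.symm
      rw [hi, hj'] at this
      linarith [hd i, hd j]
    have hdet := hP.2
    rw [hdiag, Matrix.det_diagonal, Finset.prod_eq_single i (fun j _ hj => hoth j hj) (by simp),
      hi] at hdet
    norm_num at hdet
  rw [hdiag]
  ext i j
  by_cases h : i = j
  · subst h; simp [hall]
  · simp [h]

lemma evP_eq_one {n : ℕ} {p : PolyR n}
    (h : ∀ i j, ∀ M ∈ SOset n, evP M (XX i j p) = 0) {Q : Matrix (Fin n) (Fin n) ℝ}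
    (hQ : Q ∈ SOset n) : evP Q p = evP 1 p := by
  set d : Fin n → ℝ := fun i => (i : ℝ) + 1 with hd
  set K := SOset n ∩ {M | evP M p = evP Q p} with hK
  have hKc : IsCompact K := (isCompact_SO n).inter_right
    (isClosed_eq (continuous_evP p) continuous_const)
  set q : PolyR n := ∑ a, d a • MvPolynomial.X (a, a) with hq
  obtain ⟨P, hPK, hPm⟩ := hKc.exists_isMaxOn ⟨Q, hQ, rfl⟩ (continuous_evP q).continuousOn
  have hmax : ∀ i j, evP P (XF (EE i j) q) = 0 ∧ evP P (XF (EE i j) (XF (EE i j) q)) ≤ 0 := by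
    intro i j
    apply max_conditions
    intro t
    apply hPm
    refine ⟨mul_mem_SO (exp_mem_SO (EE_transpose i j) t) hPK.1, ?_⟩
    have := evP_const_of_XF_zero hPK.1 (EE_transpose i j) (h i j) t
    exact this.trans hPK.2
  have e1 : ∀ A : Matrix (Fin n) (Fin n) ℝ, evP P (XF A q) = ∑ a, d a * (A * P) a a := by
    intro A
    simp [hq, XF_X, Matrix.mul_apply, evP_X]
  have e2 : ∀ A : Matrix (Fin n) (Fin n) ℝ, evP P (XF A (XF A q)) = ∑ a, d a * (A * A * P) a a := by
    intro A
    simp only [hq, map_sum, Derivation.map_smul, XF_X, map_smul, evP_X, smul_eq_mul]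
    refine Finset.sum_congr rfl fun a _ => ?_
    rw [Matrix.mul_assoc, Matrix.mul_apply]
    simp only [Matrix.mul_apply]
  have s1 : ∀ i j : Fin n, ∑ a, d a * ((Matrix.single i j (1:ℝ)) * P) a a = d i * P j i := by
    intro i j
    rw [Finset.sum_eq_single i]
    · simp
    · intro b _ hb
      simp [hb]
    · simp
  have hP1 : P = 1 := by
    apply eq_one_of_max hPK.1 d
    · intro i; simp only [hd]; positivity
    · intro i j hij
      simp only [hd, add_left_inj, Nat.cast_inj] at hij
      exact Fin.ext hij
    · intro i j
      have := (hmax i j).1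
      rw [e1] at this
      simp only [EE, sub_mul, Matrix.sub_apply, mul_sub, Finset.sum_sub_distrib, s1] at this
      linarith
    · intro i j hij
      have := (hmax i j).2
      rw [e2] at this
      simp only [EE, sub_mul, mul_sub, single_mul_single_ite, hij, hij.symm, if_true, if_false,
        zero_smul, one_smul, zero_sub, Matrix.sub_apply, neg_mul, Matrix.neg_apply, mul_neg, sub_zero,
        Finset.sum_sub_distrib, Finset.sum_neg_distrib, s1] at this
      linarith
  have := hPK.2
  rw [hP1] at this
  exact this.symm

end SOProof3

noncomputable section SOProof4

instance instBorelMat (n : ℕ) : BorelSpace (Matrix (Fin n) (Fin n) ℝ) :=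
  inferInstanceAs (BorelSpace (Fin n → Fin n → ℝ))

instance instSCMat (n : ℕ) : SecondCountableTopology (Matrix (Fin n) (Fin n) ℝ) :=
  inferInstanceAs (SecondCountableTopology (Fin n → Fin n → ℝ))

instance instMetMat (n : ℕ) : TopologicalSpace.MetrizableSpace (Matrix (Fin n) (Fin n) ℝ) :=
  inferInstanceAs (TopologicalSpace.MetrizableSpace (Fin n → Fin n → ℝ))

lemma heat_flow {n : ℕ} (p : PolyR n) : ∃ u : ℝ → PolyR n, u 0 = p ∧
    (∀ ℓ : PolyR n →ₗ[ℝ] ℝ, ∀ s, HasDerivAt (fun s => ℓ (u s)) (ℓ (Lap n (u s))) s) ∧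
    (∀ T : PolyR n →ₗ[ℝ] PolyR n, Continuous fun x : ℝ × Matrix (Fin n) (Fin n) ℝ =>
      evP x.2 (T (u x.1))) ∧
    (∀ Q ∈ SOset n, ∃ C : ℝ, ∀ s b, (∀ i j, ∀ M ∈ SOset n, |evP M (XX i j (u s))| ≤ b) →
      |evP Q (u s) - evP 1 (u s)| ≤ C * b) := by
  obtain ⟨V, hfg, hpV, hinv⟩ := exists_inv p
  have : FiniteDimensional ℝ V := Module.Finite.iff_fg.mpr hfg
  have hLap : ∀ q ∈ V, Lap n q ∈ V := by
    intro q hq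
    rw [Lap_apply]
    exact V.sum_mem fun i _ => V.sum_mem fun j _ => hinv _ _ (hinv _ _ hq)
  obtain ⟨w, hw0, hw⟩ := exists_flow ((Lap n).restrict hLap) ⟨p, hpV⟩
  refine ⟨fun s => (w s : PolyR n), by simp [hw0], ?_, ?_, ?_⟩
  · intro ℓ s
    exact hw (ℓ ∘ₗ V.subtype) s
  · intro T
    let b := Module.finBasis ℝ V
    have e : (fun x : ℝ × Matrix (Fin n) (Fin n) ℝ => evP x.2 (T (w x.1 : PolyR n))) =
        fun x => ∑ i, b.coord i (w x.1) * evP x.2 (T (b i : PolyR n)) := by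
      funext x
      have h1 := congrArg (fun v : V => evP x.2 (T (v : PolyR n))) (b.sum_repr (w x.1))
      simp only [Submodule.coe_sum, Submodule.coe_smul, map_sum, map_smul, smul_eq_mul] at h1
      exact h1.symm
    rw [e]
    refine continuous_finsetSum _ fun i _ => Continuous.mul ?_ ?_
    · have h1 : Continuous fun s => b.coord i (w s) :=
        continuous_iff_continuousAt.mpr fun s => (hw (b.coord i) s).continuousAt
      exact h1.comp continuous_fst
    · exact (continuous_evP _).comp continuous_snd
  · intro Q hQ
    let W : Submodule ℝ (Module.Dual ℝ V) := Submodule.span ℝ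
      {φ | ∃ i j, ∃ M ∈ SOset n, φ = (evP M).toLinearMap ∘ₗ XX i j ∘ₗ V.subtype}
    let N : Module.Dual ℝ V := ((evP Q).toLinearMap - (evP 1).toLinearMap) ∘ₗ V.subtype
    have hN : N ∈ W := by
      rw [← Subspace.dualCoannihilator_dualAnnihilator_eq (W := W), Submodule.mem_dualAnnihilator]
      intro v hv
      rw [Submodule.mem_dualCoannihilator] at hv
      have h2 : evP Q (v : PolyR n) = evP 1 (v : PolyR n) := by
        apply evP_eq_one _ hQ
        intro i j M hM
        exact hv _ (Submodule.subset_span ⟨i, j, M, hM, rfl⟩)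
      simp [N, h2]
    have key : ∀ φ ∈ W, ∃ C : ℝ, ∀ (v : V) b, (∀ i j, ∀ M ∈ SOset n,
        |evP M (XX i j (v : PolyR n))| ≤ b) → |φ v| ≤ C * b := by
      intro φ hφ
      induction hφ using Submodule.span_induction with
      | mem φ h =>
        obtain ⟨i, j, M, hM, rfl⟩ := h
        refine ⟨1, fun v b hb => ?_⟩
        rw [one_mul]
        exact hb i j M hM
      | zero => exact ⟨0, fun v b _ => by simp⟩
      | add φ ψ _ _ h1 h2 =>
        obtain ⟨C1, h1⟩ := h1
        obtain ⟨C2, h2⟩ := h2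
        refine ⟨C1 + C2, fun v b hb => ?_⟩
        have := abs_add_le (φ v) (ψ v)
        have a1 := h1 v b hb
        have a2 := h2 v b hb
        rw [LinearMap.add_apply]
        linarith
      | smul a φ _ h =>
        obtain ⟨C, h⟩ := h
        refine ⟨|a| * C, fun v b hb => ?_⟩
        rw [LinearMap.smul_apply, smul_eq_mul, abs_mul, mul_assoc]
        exact mul_le_mul_of_nonneg_left (h v b hb) (abs_nonneg a)
    obtain ⟨C, hC⟩ := key N hN
    exact ⟨C, fun s b hb => hC (w s) b hb⟩

lemma ae_SO {n : ℕ} {μ : Measure (Matrix (Fin n) (Fin n) ℝ)} (hμ : IsHaarSO n μ) :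
    ∀ᵐ M ∂μ, M ∈ SOset n := hμ.2.1

lemma integrable_cont {n : ℕ} {μ : Measure (Matrix (Fin n) (Fin n) ℝ)} (hμ : IsHaarSO n μ)
    {F : Matrix (Fin n) (Fin n) ℝ → ℝ} (hF : Continuous F) : Integrable F μ := by
  have := hμ.1
  obtain ⟨C, hC⟩ := (isCompact_SO n).exists_bound_of_continuousOn hF.continuousOn
  refine Integrable.of_bound hF.aestronglyMeasurable C ?_
  filter_upwards [ae_SO hμ] with M hM using hC M hM

lemma integral_translate {n : ℕ} {μ : Measure (Matrix (Fin n) (Fin n) ℝ)} (hμ : IsHaarSO n μ)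
    {F : Matrix (Fin n) (Fin n) ℝ → ℝ} (hF : AEStronglyMeasurable F μ)
    {Q : Matrix (Fin n) (Fin n) ℝ} (hQ : Q ∈ SOset n) :
    ∫ M, F (Q * M) ∂μ = ∫ M, F M ∂μ := by
  have h := hμ.2.2 Q hQ.1 hQ.2
  have hm : Continuous fun M : Matrix (Fin n) (Fin n) ℝ => Q * M := by fun_prop
  conv_rhs => rw [← h]
  rw [integral_map hm.measurable.aemeasurable (by rw [h]; exact hF)]

lemma integral_XF {n : ℕ} {μ : Measure (Matrix (Fin n) (Fin n) ℝ)} (hμ : IsHaarSO n μ)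
    {F F' : Matrix (Fin n) (Fin n) ℝ → ℝ} (hF : Continuous F) (hF' : Continuous F')
    {A : Matrix (Fin n) (Fin n) ℝ} (hA : Aᵀ = -A)
    (hd : ∀ M t, HasDerivAt (fun s : ℝ => F (NormedSpace.exp (s • A) * M))
      (F' (NormedSpace.exp (t • A) * M)) t) : ∫ M, F' M ∂μ = 0 := by
  have := hμ.1
  obtain ⟨C, hC⟩ := (isCompact_SO n).exists_bound_of_continuousOn hF'.continuousOn
  have hm : ∀ Q : Matrix (Fin n) (Fin n) ℝ,
    Continuous fun M : Matrix (Fin n) (Fin n) ℝ => Q * M := fun Q => by fun_prop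
  have h := (hasDerivAt_integral_of_dominated_loc_of_deriv_le (μ := μ) (𝕜 := ℝ)
    (F := fun s M => F (NormedSpace.exp (s • A) * M))
    (F' := fun s M => F' (NormedSpace.exp (s • A) * M)) (x₀ := 0) (s := Set.univ)
    (bound := fun _ => C) Filter.univ_mem
    (Filter.Eventually.of_forall fun s => (hF.comp (hm _)).aestronglyMeasurable)
    (integrable_cont hμ (hF.comp (hm _))) (hF'.comp (hm _)).aestronglyMeasurable
    (by
      filter_upwards [ae_SO hμ] with M hM s _
      exact hC _ (mul_mem_SO (exp_mem_SO hA s) hM))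
    (integrable_const C)
    (Filter.Eventually.of_forall fun M s _ => hd M s)).2
  have hconst : (fun s : ℝ => ∫ M, F (NormedSpace.exp (s • A) * M) ∂μ) = fun _ => ∫ M, F M ∂μ := by
    funext s
    exact integral_translate hμ hF.aestronglyMeasurable (exp_mem_SO hA s)
  rw [hconst] at h
  have := h.unique (hasDerivAt_const _ _)
  simpa using this

lemma integral_Lap {n : ℕ} {μ : Measure (Matrix (Fin n) (Fin n) ℝ)} (hμ : IsHaarSO n μ)
    (q : PolyR n) : ∫ M, evP M (Lap n q) ∂μ = 0 := by
  simp only [Lap_apply, map_sum]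
  rw [integral_finsetSum _ fun i _ => integrable_finsetSum _ fun j _ =>
    integrable_cont hμ (continuous_evP _)]
  refine Finset.sum_eq_zero fun i _ => ?_
  rw [integral_finsetSum _ fun j _ => integrable_cont hμ (continuous_evP _)]
  refine Finset.sum_eq_zero fun j _ => ?_
  exact integral_XF hμ (continuous_evP (XX i j q)) (continuous_evP _) (EE_transpose i j)
    (fun M t => hasDerivAt_evP _ M _ t)

lemma integral_exp_Lap {n : ℕ} {μ : Measure (Matrix (Fin n) (Fin n) ℝ)} (hμ : IsHaarSO n μ)
    (q : PolyR n) (r : ℝ) : ∫ M, Real.exp (r * evP M q) * evP M (Lap n q) ∂μ =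
      - r * ∫ M, Real.exp (r * evP M q) * evP M (GG q) ∂μ := by
  have cE : Continuous fun M => Real.exp (r * evP M q) := by
    have := continuous_evP q
    fun_prop
  have key : ∀ i j : Fin n, ∫ M, Real.exp (r * evP M q) * evP M (XX i j (XX i j q)) ∂μ =
      - r * ∫ M, Real.exp (r * evP M q) * (evP M (XX i j q)) ^ 2 ∂μ := by
    intro i j
    have c1 := continuous_evP (XX i j q)
    have c2 := continuous_evP (XX i j (XX i j q))
    have h := integral_XF hμ (A := EE i j)
      (F := fun M => Real.exp (r * evP M q) * evP M (XX i j q))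
      (F' := fun M => r * (Real.exp (r * evP M q) * (evP M (XX i j q)) ^ 2) +
        Real.exp (r * evP M q) * evP M (XX i j (XX i j q)))
      (cE.mul c1) (by fun_prop) (EE_transpose i j) (by
        intro M t
        have d1 := hasDerivAt_evP (EE i j) M q t
        have d2 := hasDerivAt_evP (EE i j) M (XX i j q) t
        refine ((d1.const_mul r).exp.mul d2).congr_deriv ?_
        simp only [XX_apply]
        ring)
    rw [integral_add (integrable_cont hμ (by fun_prop)) (integrable_cont hμ (by fun_prop)),
      integral_const_mul] at h
    linarith
  simp only [Lap_apply, GG, map_sum, map_pow, Finset.mul_sum]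
  have cc : ∀ i j : Fin n, Integrable (fun M => Real.exp (r * evP M q) * (evP M (XX i j q)) ^ 2) μ :=
    fun i j => integrable_cont hμ (cE.mul ((continuous_evP _).pow 2))
  have cc' : ∀ i j : Fin n,
    Integrable (fun M => Real.exp (r * evP M q) * (evP M (XX i j (XX i j q)))) μ :=
    fun i j => integrable_cont hμ (cE.mul ((continuous_evP _)))
  rw [integral_finsetSum _ fun i _ => integrable_finsetSum _ fun j _ => cc' i j,
    integral_finsetSum _ fun i _ => integrable_finsetSum _ fun j _ => cc i j, Finset.mul_sum]
  refine Finset.sum_congr rfl fun i _ => ?_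
  rw [integral_finsetSum _ fun j _ => cc' i j,
    integral_finsetSum _ fun j _ => cc i j, Finset.mul_sum]
  exact Finset.sum_congr rfl fun j _ => key i j

/-- maximum of a polynomial on SO(n): the Laplacian is nonpositive -/
lemma Lap_nonpos {n : ℕ} {q : PolyR n} {M : Matrix (Fin n) (Fin n) ℝ} (hM : M ∈ SOset n)
    (hmax : ∀ N ∈ SOset n, evP N q ≤ evP M q) : evP M (Lap n q) ≤ 0 := by
  rw [Lap_apply]
  simp only [map_sum]
  refine Finset.sum_nonpos fun i _ => Finset.sum_nonpos fun j _ => ?_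
  exact (max_conditions q fun t => hmax _ (mul_mem_SO (exp_mem_SO (EE_transpose i j) t) hM)).2

end SOProof4

noncomputable section SOProof5

open Filter Topology

lemma poly_mgf {n : ℕ} (hn : 3 ≤ n) {μ : Measure (Matrix (Fin n) (Fin n) ℝ)} (hμ : IsHaarSO n μ)
    (p : PolyR n) (B : ℝ) (hB : ∀ M ∈ SOset n, evP M (GG p) ≤ B) (r : ℝ) :
    ∫ M, Real.exp (r * evP M p) ∂μ ≤
      Real.exp (r * (∫ M, evP M p ∂μ) + r ^ 2 * B / (2 * ((n : ℝ) - 2))) := by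
  have := hμ.1
  have hn' : (0:ℝ) < (n : ℝ) - 2 := by
    have : (3:ℝ) ≤ n := by exact_mod_cast hn
    linarith
  set c : ℝ := 2 * ((n : ℝ) - 2) with hc
  have hcpos : 0 < c := by positivity
  obtain ⟨u, hu0, hud, huc, hue⟩ := heat_flow p
  have hev : ∀ M s, HasDerivAt (fun s => evP M (u s)) (evP M (Lap n (u s))) s :=
    fun M s => hud (evP M).toLinearMap s
  have hevX : ∀ M i j s, HasDerivAt (fun s => evP M (XX i j (u s)))
      (evP M (XX i j (Lap n (u s)))) s :=
    fun M i j s => hud ((evP M).toLinearMap ∘ₗ XX i j) s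
  have huc0 : Continuous fun x : ℝ × Matrix (Fin n) (Fin n) ℝ => evP x.2 (u x.1) :=
    huc LinearMap.id
  have hucL : Continuous fun x : ℝ × Matrix (Fin n) (Fin n) ℝ => evP x.2 (Lap n (u x.1)) :=
    huc (Lap n)
  -- gradient bound
  have hgrad : ∀ s, 0 ≤ s → ∀ M ∈ SOset n, evP M (GG (u s)) ≤ Real.exp (-c * s) * B := by
    apply max_principle (isCompact_SO n) (fun s M => evP M (GG (u s)))
      (fun s M => evP M (∑ i, ∑ j, 2 * (XX i j (u s) * XX i j (Lap n (u s))))) c B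
    · simp only [GG, map_sum, map_pow]
      exact continuous_finsetSum _ fun i _ => continuous_finsetSum _ fun j _ => (huc (XX i j)).pow 2
    · intro s M _
      simp only [GG, map_sum, map_pow, map_mul, map_ofNat]
      refine HasDerivAt.fun_sum fun i _ => HasDerivAt.fun_sum fun j _ => ?_
      refine ((hevX M i j s).fun_pow 2).congr_deriv ?_
      simp
      ring
    · intro s M hM hmax
      have h1 := bochner (u s) M
      have h2 := Lap_nonpos hM hmax
      simp only [hc]
      linarith
    · intro M hM
      rw [hu0]
      exact hB M hM
  -- uniform bound
  obtain ⟨C0, hC0⟩ := (isCompact_SO n).exists_bound_of_continuousOn (continuous_evP p).continuousOn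
  have hup : ∀ s, 0 ≤ s → ∀ M ∈ SOset n, evP M (u s) ≤ C0 := by
    have := max_principle (isCompact_SO n) (fun s M => evP M (u s))
      (fun s M => evP M (Lap n (u s))) 0 C0 huc0 (fun s M _ => hev M s)
      (fun s M hM hmax => by simpa using Lap_nonpos hM hmax)
      (fun M hM => by rw [hu0]; exact (abs_le.mp (hC0 M hM)).2)
    simpa using this
  have hlo : ∀ s, 0 ≤ s → ∀ M ∈ SOset n, -evP M (u s) ≤ C0 := by
    have := max_principle (isCompact_SO n) (fun s M => -evP M (u s))
      (fun s M => -evP M (Lap n (u s))) 0 C0 huc0.neg (fun s M _ => (hev M s).fun_neg)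
      (fun s M hM hmax => by
        have := Lap_nonpos (q := -u s) hM (by simpa using hmax)
        simpa using this)
      (fun M hM => by rw [hu0]; linarith [(abs_le.mp (hC0 M hM)).1])
    simpa using this
  have habs : ∀ s, 0 ≤ s → ∀ M ∈ SOset n, |evP M (u s)| ≤ C0 := fun s hs M hM =>
    abs_le.mpr ⟨by linarith [hlo s hs M hM], hup s hs M hM⟩
  -- mean is preserved
  set m := ∫ M, evP M p ∂μ with hm
  have hmean : ∀ s, ∫ M, evP M (u s) ∂μ = m := by
    let ℓ : PolyR n →ₗ[ℝ] ℝ :=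
      { toFun := fun q => ∫ M, evP M q ∂μ
        map_add' := fun a b => by
          simp only [map_add]
          exact integral_add (integrable_cont hμ (continuous_evP _))
            (integrable_cont hμ (continuous_evP _))
        map_smul' := fun a b => by
          simp only [map_smul, smul_eq_mul, RingHom.id_apply]
          exact integral_const_mul _ _ }
    have hd : ∀ s, HasDerivAt (fun s => ℓ (u s)) 0 s := fun s =>
      (hud ℓ s).congr_deriv (integral_Lap hμ (u s))
    intro s
    have h1 : ℓ (u s) = ℓ (u 0) :=
      is_const_of_deriv_eq_zero (fun t => (hd t).differentiableAt) (fun t => (hd t).deriv) s 0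
    rw [hu0] at h1
    exact h1
  -- convergence
  have hB0 : 0 ≤ B := by
    refine le_trans ?_ (hB 1 (one_mem_SO n))
    simp only [GG, map_sum, map_pow]
    positivity
  have hdec : Tendsto (fun s : ℝ => Real.exp (-c * s) * B) atTop (𝓝 0) := by
    have h1 : Tendsto (fun s : ℝ => -c * s) atTop atBot :=
      tendsto_id.const_mul_atTop_of_neg (by linarith)
    simpa using (Real.tendsto_exp_atBot.comp h1).mul_const B
  have hdiff : ∀ Q ∈ SOset n, Tendsto (fun s => evP Q (u s) - evP 1 (u s)) atTop (𝓝 0) := by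
    intro Q hQ
    obtain ⟨C, hC⟩ := hue Q hQ
    have h1 : Tendsto (fun s : ℝ => C * Real.sqrt (Real.exp (-c * s) * B)) atTop (𝓝 0) := by
      have := (hdec.sqrt).const_mul C
      simpa using this
    refine squeeze_zero_norm' ?_ h1
    filter_upwards [eventually_ge_atTop 0] with s hs
    refine hC s _ fun i j M hM => ?_
    apply Real.abs_le_sqrt
    refine le_trans ?_ (hgrad s hs M hM)
    simp only [GG, map_sum, map_pow]
    refine le_trans ?_ (Finset.single_le_sum
      (f := fun i => ∑ j, (evP M (XX i j (u s))) ^ 2)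
      (fun _ _ => Finset.sum_nonneg fun _ _ => sq_nonneg _) (Finset.mem_univ i))
    exact Finset.single_le_sum
      (f := fun j => (evP M (XX i j (u s))) ^ 2) (fun _ _ => sq_nonneg _) (Finset.mem_univ j)
  have hone : Tendsto (fun s => evP 1 (u s)) atTop (𝓝 m) := by
    have h1 : Tendsto (fun s => ∫ Q, (evP Q (u s) - evP 1 (u s)) ∂μ) atTop
        (𝓝 (∫ Q : Matrix (Fin n) (Fin n) ℝ, (0:ℝ) ∂μ)) := by
      refine tendsto_integral_filter_of_dominated_convergence (fun _ => C0 + C0) ?_ ?_ ?_ ?_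
      · exact Eventually.of_forall fun s =>
          ((continuous_evP (u s)).sub continuous_const).aestronglyMeasurable
      · filter_upwards [eventually_ge_atTop 0] with s hs
        filter_upwards [ae_SO hμ] with Q hQ
        exact (abs_sub _ _).trans (add_le_add (habs s hs Q hQ) (habs s hs 1 (one_mem_SO n)))
      · exact integrable_const _
      · filter_upwards [ae_SO hμ] with Q hQ using hdiff Q hQ
    have h2 : ∀ s, ∫ Q, (evP Q (u s) - evP 1 (u s)) ∂μ = m - evP 1 (u s) := by
      intro s
      rw [integral_sub (integrable_cont hμ (continuous_evP _)) (integrable_const _), hmean]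
      simp
    simp only [h2, integral_zero] at h1
    simpa using (tendsto_const_nhds (x := m)).sub h1
  have hconv : ∀ Q ∈ SOset n, Tendsto (fun s => evP Q (u s)) atTop (𝓝 m) := by
    intro Q hQ
    simpa using (hdiff Q hQ).add hone
  -- the exponential moment along the flow
  set φ : ℝ → ℝ := fun s => ∫ M, Real.exp (r * evP M (u s)) ∂μ with hφ
  have hφlim : Tendsto φ atTop (𝓝 (Real.exp (r * m))) := by
    have h1 : Tendsto φ atTop
        (𝓝 (∫ Q : Matrix (Fin n) (Fin n) ℝ, Real.exp (r * m) ∂μ)) := by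
      refine tendsto_integral_filter_of_dominated_convergence (fun _ => Real.exp (|r| * C0)) ?_ ?_ ?_ ?_
      · exact Eventually.of_forall fun s =>
          (Real.continuous_exp.comp ((continuous_evP (u s)).const_mul r)).aestronglyMeasurable
      · filter_upwards [eventually_ge_atTop 0] with s hs
        filter_upwards [ae_SO hμ] with Q hQ
        rw [Real.norm_eq_abs, Real.abs_exp, Real.exp_le_exp]
        refine (le_abs_self _).trans ?_
        rw [abs_mul]
        exact mul_le_mul_of_nonneg_left (habs s hs Q hQ) (abs_nonneg r)
      · exact integrable_const _
      · filter_upwards [ae_SO hμ] with Q hQ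
        exact (Real.continuous_exp.tendsto _).comp ((hconv Q hQ).const_mul r)
    simpa using h1
  have cE : ∀ s, Continuous fun M => Real.exp (r * evP M (u s)) := fun s =>
    Real.continuous_exp.comp ((continuous_evP (u s)).const_mul r)
  have hφd : ∀ s, HasDerivAt φ (-r ^ 2 * ∫ M, Real.exp (r * evP M (u s)) * evP M (GG (u s)) ∂μ) s := by
    intro s₀
    have hbd : Continuous fun x : ℝ × Matrix (Fin n) (Fin n) ℝ =>
        Real.exp (r * evP x.2 (u x.1)) * (r * evP x.2 (Lap n (u x.1))) := by fun_prop
    obtain ⟨C, hC⟩ := ((isCompact_Icc (a := s₀ - 1) (b := s₀ + 1)).prod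
      (isCompact_SO n)).exists_bound_of_continuousOn hbd.continuousOn
    have h := (hasDerivAt_integral_of_dominated_loc_of_deriv_le (μ := μ) (𝕜 := ℝ)
      (F := fun s M => Real.exp (r * evP M (u s)))
      (F' := fun s M => Real.exp (r * evP M (u s)) * (r * evP M (Lap n (u s))))
      (x₀ := s₀) (s := Set.Icc (s₀ - 1) (s₀ + 1))
      (bound := fun _ => C) (Icc_mem_nhds (by linarith) (by linarith))
      (Eventually.of_forall fun s => (cE s).aestronglyMeasurable)
      (integrable_cont hμ (cE s₀))
      ((cE s₀).mul ((continuous_evP _).const_mul r)).aestronglyMeasurable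
      (by
        filter_upwards [ae_SO hμ] with M hM s hs
        exact hC (s, M) ⟨hs, hM⟩)
      (integrable_const C)
      (Eventually.of_forall fun M s _ => ((hev M s).const_mul r).exp)).2
    refine h.congr_deriv ?_
    have e : ∀ M, Real.exp (r * evP M (u s₀)) * (r * evP M (Lap n (u s₀))) =
      r * (Real.exp (r * evP M (u s₀)) * evP M (Lap n (u s₀))) := fun M => by ring
    simp only [e]
    rw [integral_const_mul, integral_exp_Lap hμ]
    ring
  have hφd' : ∀ s, 0 ≤ s → -(r ^ 2 * (Real.exp (-c * s) * B)) * φ s ≤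
      -r ^ 2 * ∫ M, Real.exp (r * evP M (u s)) * evP M (GG (u s)) ∂μ := by
    intro s hs
    have h1 : ∫ M, Real.exp (r * evP M (u s)) * evP M (GG (u s)) ∂μ ≤
        (Real.exp (-c * s) * B) * φ s := by
      rw [hφ, ← integral_const_mul]
      refine integral_mono_ae (integrable_cont hμ ((cE s).mul (continuous_evP _)))
        ((integrable_cont hμ (cE s)).const_mul _) ?_
      filter_upwards [ae_SO hμ] with M hM
      rw [mul_comm]
      exact mul_le_mul_of_nonneg_right (hgrad s hs M hM) (Real.exp_pos _).le
    nlinarith [sq_nonneg r, mul_le_mul_of_nonneg_left h1 (sq_nonneg r)]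
  -- monotone quantity
  set k := r ^ 2 * B / c with hk
  have hφpos : ∀ s, 0 ≤ φ s := fun s => integral_nonneg fun M => (Real.exp_pos _).le
  have hψd : ∀ s, HasDerivAt (fun s => φ s * Real.exp (-k * Real.exp (-c * s)))
      ((-r ^ 2 * ∫ M, Real.exp (r * evP M (u s)) * evP M (GG (u s)) ∂μ) *
        Real.exp (-k * Real.exp (-c * s)) +
       φ s * (Real.exp (-k * Real.exp (-c * s)) * (r ^ 2 * (Real.exp (-c * s) * B)))) s := by
    intro s
    have e1 : HasDerivAt (fun s => Real.exp (-c * s)) (Real.exp (-c * s) * (-c)) s := by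
      simpa using ((hasDerivAt_id s).const_mul (-c)).exp
    have e2 := (e1.const_mul (-k)).exp
    refine ((hφd s).mul e2).congr_deriv ?_
    congr 3
    rw [hk]
    field_simp
  have hmono : MonotoneOn (fun s => φ s * Real.exp (-k * Real.exp (-c * s))) (Set.Ici 0) := by
    refine monotoneOn_of_deriv_nonneg (convex_Ici 0)
      (fun s _ => (hψd s).continuousAt.continuousWithinAt)
      (fun s _ => (hψd s).differentiableAt.differentiableWithinAt) ?_
    intro s hs
    rw [interior_Ici] at hs
    rw [(hψd s).deriv]
    have h1 := mul_le_mul_of_nonneg_right (hφd' s (le_of_lt hs))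
      (Real.exp_pos (-k * Real.exp (-c * s))).le
    linarith
  have hlim : Tendsto (fun s => φ s * Real.exp (-k * Real.exp (-c * s))) atTop
      (𝓝 (Real.exp (r * m))) := by
    have h1 : Tendsto (fun s : ℝ => -c * s) atTop atBot :=
      tendsto_id.const_mul_atTop_of_neg (by linarith)
    have h2 := (Real.tendsto_exp_atBot.comp h1).const_mul (-k)
    have h3 := hφlim.mul ((Real.continuous_exp.tendsto _).comp h2)
    simpa using h3
  have hfin : φ 0 * Real.exp (-k) ≤ Real.exp (r * m) := by
    refine ge_of_tendsto hlim ?_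
    filter_upwards [eventually_ge_atTop 0] with s hs
    have := hmono (Set.mem_Ici.mpr (le_refl 0)) (Set.mem_Ici.mpr hs) hs
    simpa using this
  have hφ0 : φ 0 = ∫ M, Real.exp (r * evP M p) ∂μ := by simp only [hφ, hu0]
  rw [← hφ0, Real.exp_add]
  rw [Real.exp_neg, ← div_eq_mul_inv, div_le_iff₀ (Real.exp_pos _)] at hfin
  exact hfin

end SOProof5

noncomputable section SOProof6

open Filter Topology

lemma frob_trace {n : ℕ} (M : Matrix (Fin n) (Fin n) ℝ) :
    frobNorm M = Real.sqrt (Matrix.trace (M * Mᵀ)) := by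
  unfold frobNorm
  congr 1
  simp only [Matrix.trace, Matrix.diag, Matrix.mul_apply, Matrix.transpose_apply, sq]

lemma frob_mul_SO {n : ℕ} (M : Matrix (Fin n) (Fin n) ℝ) {Q : Matrix (Fin n) (Fin n) ℝ}
    (hQ : Q ∈ SOset n) : frobNorm (M * Q) = frobNorm M := by
  rw [frob_trace, frob_trace, Matrix.transpose_mul, Matrix.mul_assoc, ← Matrix.mul_assoc Q,
    SO_mul_transpose hQ, Matrix.one_mul]

lemma frob_SO_mul {n : ℕ} (M : Matrix (Fin n) (Fin n) ℝ) {Q : Matrix (Fin n) (Fin n) ℝ}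
    (hQ : Q ∈ SOset n) : frobNorm (Q * M) = frobNorm M := by
  rw [frob_trace, frob_trace, Matrix.transpose_mul, Matrix.trace_mul_comm, Matrix.mul_assoc,
    ← Matrix.mul_assoc Qᵀ, hQ.1, Matrix.one_mul, Matrix.trace_mul_comm]

lemma frob_nonneg {n : ℕ} (M : Matrix (Fin n) (Fin n) ℝ) : 0 ≤ frobNorm M := Real.sqrt_nonneg _

lemma frob_smul {n : ℕ} (c : ℝ) (M : Matrix (Fin n) (Fin n) ℝ) :
    frobNorm (c • M) = |c| * frobNorm M := by
  unfold frobNorm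
  rw [← Real.sqrt_sq_eq_abs, ← Real.sqrt_mul (sq_nonneg c)]
  congr 1
  simp only [Matrix.smul_apply, smul_eq_mul, mul_pow, Finset.mul_sum]

lemma continuous_frob {n : ℕ} : Continuous fun M : Matrix (Fin n) (Fin n) ℝ => frobNorm M := by
  unfold frobNorm
  refine Real.continuous_sqrt.comp ?_
  refine continuous_finsetSum _ fun i _ => continuous_finsetSum _ fun j _ => ?_
  exact (continuous_apply_apply i j).pow 2

lemma XF_bound {n : ℕ} (p : PolyR n) (L : ℝ)
    (hp : ∀ M₁ ∈ SOset n, ∀ M₂ ∈ SOset n, |evP M₁ p - evP M₂ p| ≤ L * frobNorm (M₁ - M₂))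
    {A : Matrix (Fin n) (Fin n) ℝ} (hA : Aᵀ = -A) {M : Matrix (Fin n) (Fin n) ℝ}
    (hM : M ∈ SOset n) : |evP M (XF A p)| ≤ L * frobNorm A := by
  have h1 := hasDerivAt_evP A M p 0
  rw [hasDerivAt_iff_tendsto_slope] at h1
  have h2 : Tendsto (fun s : ℝ => (s - 0)⁻¹ • (NormedSpace.exp (s • A) * M - M)) (𝓝[≠] 0)
      (𝓝 (A * M)) := by
    refine tendsto_pi_nhds.2 fun i => tendsto_pi_nhds.2 fun j => ?_
    have := hasDerivAt_exp_entry A M 0 i j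
    rw [hasDerivAt_iff_tendsto_slope] at this
    refine Tendsto.congr (fun s => ?_) (by simpa using this)
    simp [slope_def_module]
  have h3 := (continuous_frob.tendsto (A * M)).comp h2
  have h4 := le_of_tendsto_of_tendsto' h1.abs (h3.const_mul L) (fun s => ?_)
  · simpa [frob_mul_SO A hM] using h4
  · simp only [Function.comp, slope_def_module, smul_eq_mul, abs_mul, frob_smul]
    have := hp _ (mul_mem_SO (exp_mem_SO hA s) hM) M hM
    simp only [zero_smul, NormedSpace.exp_zero, Matrix.one_mul]
    calc _ ≤ |(s-0)⁻¹| * (L * frobNorm (NormedSpace.exp (s • A) * M - M)) := by gcongr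
      _ = _ := by ring

lemma GG_bound {n : ℕ} (p : PolyR n) (L : ℝ)
    (hp : ∀ M₁ ∈ SOset n, ∀ M₂ ∈ SOset n, |evP M₁ p - evP M₂ p| ≤ L * frobNorm (M₁ - M₂))
    {M : Matrix (Fin n) (Fin n) ℝ} (hM : M ∈ SOset n) : evP M (GG p) ≤ 4 * L ^ 2 := by
  set x : Fin n → Fin n → ℝ := fun i j => evP M (XX i j p) with hx
  have hsw : ∀ i j, x j i = - x i j := by
    intro i j; simp only [hx]; rw [XX_swap, map_neg]
  set A : Matrix (Fin n) (Fin n) ℝ := ∑ i, ∑ j, x i j • EE i j with hAd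
  have hA : Aᵀ = -A := by
    simp only [hAd, Matrix.transpose_sum, Matrix.transpose_smul, EE_transpose, smul_neg,
      Finset.sum_neg_distrib]
  have hG : evP M (GG p) = ∑ i, ∑ j, x i j ^ 2 := by
    simp only [GG, map_sum, map_pow, hx]
  have hent : ∀ k l, A k l = 2 * x k l := by
    intro k l
    have : A k l = x k l - x l k := by
      simp only [hAd, Matrix.sum_apply, Matrix.smul_apply, EE, Matrix.sub_apply, Matrix.single_apply,
        smul_eq_mul, mul_sub, Finset.sum_sub_distrib]
      congr 1
      · simp [ite_and]
      · simp [ite_and]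
    rw [this, hsw k l]; ring
  have hXA : evP M (XF A p) = evP M (GG p) := by
    have : XF A p = ∑ i, ∑ j, x i j • XX i j p := by
      let ℓ : Matrix (Fin n) (Fin n) ℝ →ₗ[ℝ] PolyR n :=
        { toFun := fun B => XF B p
          map_add' := fun B C => by rw [XF_add]; rfl
          map_smul' := fun c B => by rw [XF_smul]; rfl }
      have h1 : XF A p = ℓ A := rfl
      rw [h1, hAd]
      simp only [map_sum, map_smul]
      rfl
    rw [this, hG]
    simp only [map_sum, map_smul, smul_eq_mul, sq, hx]
  have hfr : frobNorm A = 2 * Real.sqrt (evP M (GG p)) := by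
    rw [hG]
    unfold frobNorm
    simp only [hent, mul_pow, ← Finset.mul_sum]
    rw [Real.sqrt_mul (by norm_num), Real.sqrt_sq (by norm_num)]
  clear_value A
  have hb := XF_bound p L hp hA hM
  rw [hXA, hfr] at hb
  have h0 : 0 ≤ evP M (GG p) := by
    rw [hG]; exact Finset.sum_nonneg fun i _ => Finset.sum_nonneg fun j _ => sq_nonneg _
  rw [abs_of_nonneg h0] at hb
  have hgg : evP M (GG p) = Real.sqrt (evP M (GG p)) ^ 2 := (Real.sq_sqrt h0).symm
  generalize Real.sqrt (evP M (GG p)) = g at hb hgg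
  generalize evP M (GG p) = y at hb hgg
  subst hgg
  nlinarith [sq_nonneg (g - 2 * L)]

end SOProof6

noncomputable section SOProof7

open Filter Topology

lemma integrable_mul_cont {n : ℕ} {μ : Measure (Matrix (Fin n) (Fin n) ℝ)} (hμ : IsHaarSO n μ)
    {g F : Matrix (Fin n) (Fin n) ℝ → ℝ} (hg : Integrable g μ) (hF : Continuous F) :
    Integrable (fun M => g M * F M) μ := by
  obtain ⟨C, hC⟩ := (isCompact_SO n).exists_bound_of_continuousOn hF.continuousOn
  refine hg.mul_bdd (c := C) hF.aestronglyMeasurable ?_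
  filter_upwards [ae_SO hμ] with M hM using hC M hM

def pairK {n : ℕ} (Q M : Matrix (Fin n) (Fin n) ℝ) : ℝ := n + ∑ i, ∑ j, Q i j * M i j

lemma continuous_pairK {n : ℕ} (M : Matrix (Fin n) (Fin n) ℝ) : Continuous fun Q => pairK Q M := by
  unfold pairK
  refine continuous_const.add (continuous_finsetSum _ fun i _ => continuous_finsetSum _ fun j _ => ?_)
  exact (continuous_apply_apply i j).mul continuous_const

lemma kernel_poly {n : ℕ} {μ : Measure (Matrix (Fin n) (Fin n) ℝ)} (hμ : IsHaarSO n μ) (k : ℕ) :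
    ∀ g : Matrix (Fin n) (Fin n) ℝ → ℝ, Integrable g μ →
    ∃ p : PolyR n, ∀ M, evP M p = ∫ Q, g Q * pairK Q M ^ k ∂μ := by
  induction k with
  | zero =>
    intro g hg
    refine ⟨MvPolynomial.C (∫ Q, g Q ∂μ), fun M => ?_⟩
    simp [evP]
  | succ k ih =>
    intro g hg
    obtain ⟨p0, hp0⟩ := ih g hg
    have hgi : ∀ i j, Integrable (fun Q : Matrix (Fin n) (Fin n) ℝ => g Q * Q i j) μ := fun i j =>
      integrable_mul_cont hμ hg (continuous_apply_apply i j)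
    choose q hq using fun i j => ih _ (hgi i j)
    refine ⟨(n : ℝ) • p0 + ∑ i, ∑ j, MvPolynomial.X (i, j) * q i j, fun M => ?_⟩
    simp only [map_add, map_smul, map_sum, map_mul, evP_X, hq, hp0, smul_eq_mul]
    have hc : Continuous fun Q => pairK Q M ^ k := (continuous_pairK M).pow k
    simp only [← integral_const_mul]
    have e1 : ∀ i j, Integrable (fun Q => M i j * (g Q * Q i j * pairK Q M ^ k)) μ := fun i j =>
      (integrable_mul_cont hμ (hgi i j) hc).const_mul _
    have e0 : Integrable (fun Q => (n : ℝ) * (g Q * pairK Q M ^ k)) μ :=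
      (integrable_mul_cont hμ hg hc).const_mul _
    have e2 : ∀ i, ∑ j, ∫ Q, M i j * (g Q * Q i j * pairK Q M ^ k) ∂μ
        = ∫ Q, ∑ j, M i j * (g Q * Q i j * pairK Q M ^ k) ∂μ := fun i =>
      (integral_finsetSum _ fun j _ => e1 i j).symm
    simp only [e2]
    rw [← integral_finsetSum _ fun i _ => integrable_finsetSum _ fun j _ => e1 i j,
      ← integral_add e0 (integrable_finsetSum _ fun i _ => integrable_finsetSum _ fun j _ => e1 i j)]
    congr 1
    ext Q
    rw [pow_succ]
    conv_rhs => rw [pairK]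
    have : ∑ i, ∑ j, M i j * (g Q * Q i j * pairK Q M ^ k)
        = g Q * pairK Q M ^ k * ∑ i, ∑ j, Q i j * M i j := by
      simp only [Finset.mul_sum]
      refine Finset.sum_congr rfl fun i _ => Finset.sum_congr rfl fun j _ => by ring
    rw [this]
    simp only [pairK]
    ring

lemma pairK_trace {n : ℕ} (Q M : Matrix (Fin n) (Fin n) ℝ) :
    pairK Q M = n + Matrix.trace (Q * Mᵀ) := by
  simp only [pairK, Matrix.trace, Matrix.diag, Matrix.mul_apply, Matrix.transpose_apply]

lemma pairK_mul {n : ℕ} (Q : Matrix (Fin n) (Fin n) ℝ) {M : Matrix (Fin n) (Fin n) ℝ}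
    (hM : M ∈ SOset n) : pairK (M * Q) M = pairK Q 1 := by
  rw [pairK_trace, pairK_trace, Matrix.trace_mul_comm, ← Matrix.mul_assoc, hM.1]
  simp

lemma pairK_nonneg {n : ℕ} {Q : Matrix (Fin n) (Fin n) ℝ} (hQ : Q ∈ SOset n) : 0 ≤ pairK Q 1 := by
  rw [pairK_trace, Matrix.transpose_one, Matrix.mul_one, Matrix.trace]
  have : ∑ i : Fin n, (-1 : ℝ) ≤ ∑ i, Matrix.diag Q i :=
    Finset.sum_le_sum fun i _ => (abs_le.1 (SO_entry hQ i i)).1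
  simp at this ⊢
  linarith

lemma pairK_lt {n : ℕ} {Q : Matrix (Fin n) (Fin n) ℝ} (hQ : Q ∈ SOset n) (hne : Q ≠ 1) :
    pairK Q 1 < pairK (1 : Matrix (Fin n) (Fin n) ℝ) 1 := by
  have h1 : Matrix.trace ((Q - 1) * (Q - 1)ᵀ) = 2 * (n - Matrix.trace Q) := by
    rw [Matrix.transpose_sub, Matrix.transpose_one, sub_mul, mul_sub, mul_sub, SO_mul_transpose hQ]
    simp
    ring
  have h2 : 0 < Matrix.trace ((Q - 1) * (Q - 1)ᵀ) := by
    have e : Matrix.trace ((Q - 1) * (Q - 1)ᵀ) = ∑ i, ∑ j, (Q - 1) i j ^ 2 := by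
      simp only [Matrix.trace, Matrix.diag, Matrix.mul_apply, Matrix.transpose_apply, sq]
    rw [e]
    have : ∃ i j, (Q - 1) i j ≠ 0 := by
      by_contra hcon
      push Not at hcon
      exact hne (sub_eq_zero.1 (Matrix.ext hcon))
    obtain ⟨i, j, hij⟩ := this
    refine Finset.sum_pos' (fun i _ => Finset.sum_nonneg fun j _ => sq_nonneg _)
      ⟨i, Finset.mem_univ _, ?_⟩
    exact Finset.sum_pos' (fun j _ => sq_nonneg _) ⟨j, Finset.mem_univ _, by positivity⟩
  rw [pairK_trace, pairK_trace]
  simp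
  linarith

lemma nhds_pos {n : ℕ} {μ : Measure (Matrix (Fin n) (Fin n) ℝ)} (hμ : IsHaarSO n μ)
    (u : Set (Matrix (Fin n) (Fin n) ℝ)) (hu : IsOpen u) (h1 : 1 ∈ u) : 0 < μ (u ∩ SOset n) := by
  have := hμ.1
  have hs : μ (SOset n) ≠ 0 := by
    rw [prob_compl_eq_zero_iff (isClosed_SO n).measurableSet |>.1 (ae_SO hμ)]
    exact one_ne_zero
  obtain ⟨M, hM, hpos⟩ := exists_mem_forall_mem_nhdsWithin_pos_measure hs
  have hc : Continuous fun B : Matrix (Fin n) (Fin n) ℝ => Mᵀ * B := by fun_prop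
  have hMt := transpose_mem_SO hM
  have hmem : (fun B => Mᵀ * B) ⁻¹' (u ∩ SOset n) ∈ 𝓝[SOset n] M := by
    have a1 : (fun B => Mᵀ * B) ⁻¹' u ∈ 𝓝 M :=
      (hu.preimage hc).mem_nhds (by simpa [hM.1] using h1)
    filter_upwards [mem_nhdsWithin_of_mem_nhds a1, self_mem_nhdsWithin] with B hB hB2
    exact ⟨hB, mul_mem_SO hMt hB2⟩
  have := hpos _ hmem
  rwa [← Measure.map_apply hc.measurable (hu.measurableSet.inter (isClosed_SO n).measurableSet),
    hμ.2.2 _ hMt.1 hMt.2] at this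

lemma lip_mgf {n : ℕ} (hn : 3 ≤ n) {μ : Measure (Matrix (Fin n) (Fin n) ℝ)} (hμ : IsHaarSO n μ)
    {h : Matrix (Fin n) (Fin n) ℝ → ℝ} {L C : ℝ}
    (hLip : ∀ M₁ ∈ SOset n, ∀ M₂ ∈ SOset n, |h M₁ - h M₂| ≤ L * frobNorm (M₁ - M₂))
    (hC : ∀ M ∈ SOset n, |h M| ≤ C)
    (hInt : Integrable h μ) (r : ℝ) :
    ∫ M, Real.exp (r * h M) ∂μ ≤
      Real.exp (r * (∫ M, h M ∂μ) + r ^ 2 * (4 * L ^ 2) / (2 * ((n : ℝ) - 2))) := by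
  have := hμ.1
  have hnpos : (0 : ℝ) < n := by exact_mod_cast (by omega : 0 < n)
  have hC0 : 0 ≤ C := (abs_nonneg _).trans (hC 1 (one_mem_SO n))
  choose q hq using fun k => kernel_poly hμ k h hInt
  have hae := ae_SO hμ
  have hset : μ.restrict (SOset n) = μ := Measure.restrict_eq_self_of_ae_mem hae
  -- translated functions
  have hmeas : ∀ M ∈ SOset n, AEStronglyMeasurable (fun Q => h (M * Q)) μ := by
    intro M hM
    have hc : Continuous fun B : Matrix (Fin n) (Fin n) ℝ => M * B := by fun_prop
    have e := hμ.2.2 M hM.1 hM.2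
    have hh : AEStronglyMeasurable h (μ.map fun B => M * B) := by rw [e]; exact hInt.1
    exact hh.comp_measurable hc.measurable
  have hint : ∀ M ∈ SOset n, Integrable (fun Q => h (M * Q)) μ := by
    intro M hM
    refine Integrable.of_bound (hmeas M hM) C ?_
    filter_upwards [hae] with Q hQ using hC _ (mul_mem_SO hM hQ)
  have hwc : ∀ k, Continuous fun Q : Matrix (Fin n) (Fin n) ℝ => pairK Q 1 ^ k := fun k =>
    (continuous_pairK 1).pow k
  set W : ℕ → ℝ := fun k => ∫ Q, pairK Q 1 ^ k ∂μ with hW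
  have hW0 : ∀ k, 0 ≤ W k := fun k => integral_nonneg_of_ae (by
    filter_upwards [hae] with Q hQ using pow_nonneg (pairK_nonneg hQ) k)
  have hq2 : ∀ k, ∀ M ∈ SOset n, evP M (q k) = ∫ Q, h (M * Q) * pairK Q 1 ^ k ∂μ := by
    intro k M hM
    have hc : Continuous fun Q : Matrix (Fin n) (Fin n) ℝ => pairK Q M ^ k :=
      (continuous_pairK M).pow k
    rw [hq, ← integral_translate hμ (integrable_mul_cont hμ hInt hc).1 hM]
    simp only [pairK_mul _ hM]
  set p : ℕ → PolyR n := fun k => (W k)⁻¹ • q k with hp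
  have hpe : ∀ k M, evP M (p k) = (W k)⁻¹ * evP M (q k) := by
    intro k M; simp only [hp, map_smul, smul_eq_mul]
  have hpW : ∀ k, (W k)⁻¹ * W k ≤ 1 := fun k => inv_mul_le_one
  have key : ∀ k (F : Matrix (Fin n) (Fin n) ℝ → ℝ) (D : ℝ), 0 ≤ D →
      (∀ Q ∈ SOset n, |F Q| ≤ D) →
      |(W k)⁻¹ * ∫ Q, F Q * pairK Q 1 ^ k ∂μ| ≤ D := by
    intro k F D hD hF
    have b1 : |∫ Q, F Q * pairK Q 1 ^ k ∂μ| ≤ D * W k := by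
      rw [hW]
      simp only
      rw [← integral_const_mul, ← Real.norm_eq_abs]
      refine norm_integral_le_of_norm_le ((integrable_cont hμ (hwc k)).const_mul D) ?_
      filter_upwards [hae] with Q hQ
      rw [Real.norm_eq_abs, abs_mul, abs_of_nonneg (pow_nonneg (pairK_nonneg hQ) k)]
      exact mul_le_mul_of_nonneg_right (hF Q hQ) (pow_nonneg (pairK_nonneg hQ) k)
    rw [abs_mul, abs_of_nonneg (inv_nonneg.2 (hW0 k))]
    calc _ ≤ (W k)⁻¹ * (D * W k) := mul_le_mul_of_nonneg_left b1 (inv_nonneg.2 (hW0 k))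
      _ = D * ((W k)⁻¹ * W k) := by ring
      _ ≤ D * 1 := mul_le_mul_of_nonneg_left (hpW k) hD
      _ = D := mul_one D
  have hpB : ∀ k, ∀ M ∈ SOset n, |evP M (p k)| ≤ C := by
    intro k M hM
    rw [hpe, hq2 k M hM]
    exact key k _ C hC0 fun Q hQ => hC _ (mul_mem_SO hM hQ)
  have hpL : ∀ k, ∀ M₁ ∈ SOset n, ∀ M₂ ∈ SOset n,
      |evP M₁ (p k) - evP M₂ (p k)| ≤ L * frobNorm (M₁ - M₂) := by
    intro k M₁ h₁ M₂ h₂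
    rw [hpe, hpe, hq2 k _ h₁, hq2 k _ h₂, ← mul_sub,
      ← integral_sub (integrable_mul_cont hμ (hint _ h₁) (hwc k))
        (integrable_mul_cont hμ (hint _ h₂) (hwc k))]
    simp only [← sub_mul]
    refine key k _ _ ((abs_nonneg _).trans (hLip _ h₁ _ h₂)) fun Q hQ => ?_
    refine (hLip _ (mul_mem_SO h₁ hQ) _ (mul_mem_SO h₂ hQ)).trans (le_of_eq ?_)
    rw [← Matrix.sub_mul, frob_mul_SO _ hQ]
  have hlim : ∀ M ∈ SOset n, Tendsto (fun k => evP M (p k)) atTop (𝓝 (h M)) := by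
    intro M hM
    have hcw : ContinuousWithinAt (fun Q => h (M * Q)) (SOset n) 1 := by
      have : Tendsto (fun Q => L * frobNorm (Q - 1)) (𝓝[SOset n] 1) (𝓝 0) := by
        have c : Continuous fun Q : Matrix (Fin n) (Fin n) ℝ => L * frobNorm (Q - 1) :=
          continuous_const.mul (continuous_frob.comp (by fun_prop))
        have := c.tendsto 1
        simp only [sub_self] at this
        have z : frobNorm (0 : Matrix (Fin n) (Fin n) ℝ) = 0 := by simp [frobNorm]
        rw [z, mul_zero] at this
        exact this.mono_left nhdsWithin_le_nhds
      rw [ContinuousWithinAt, tendsto_iff_dist_tendsto_zero]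
      refine squeeze_zero' (Eventually.of_forall fun _ => dist_nonneg) ?_ this
      filter_upwards [self_mem_nhdsWithin] with Q hQ
      rw [Real.dist_eq]
      refine (hLip _ (mul_mem_SO hM hQ) _ (mul_mem_SO hM (one_mem_SO n))).trans (le_of_eq ?_)
      rw [← Matrix.mul_sub, frob_SO_mul _ hM]
    have := tendsto_setIntegral_pow_smul_of_unique_maximum_of_isCompact_of_measure_nhdsWithin_pos
      (μ := μ) (isCompact_SO n) (x₀ := 1) (nhds_pos hμ) (c := fun Q => pairK Q 1)
      (g := fun Q => h (M * Q)) (continuous_pairK 1).continuousOn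
      (fun Q hQ hne => pairK_lt hQ hne) (fun Q hQ => pairK_nonneg hQ)
      (by simp only [pairK_trace]; simp; linarith) (one_mem_SO n) (hint M hM).integrableOn hcw
    rw [hset, Matrix.mul_one] at this
    refine this.congr fun k => ?_
    rw [hpe, hq2 k M hM, smul_eq_mul]
    congr 2
    ext Q
    rw [smul_eq_mul, mul_comm]
  have hmgf : ∀ k, ∫ M, Real.exp (r * evP M (p k)) ∂μ ≤
      Real.exp (r * (∫ M, evP M (p k) ∂μ) + r ^ 2 * (4 * L ^ 2) / (2 * ((n : ℝ) - 2))) := fun k =>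
    poly_mgf hn hμ (p k) _ (fun M hM => GG_bound (p k) L (hpL k) hM) r
  have l1 : Tendsto (fun k => ∫ M, evP M (p k) ∂μ) atTop (𝓝 (∫ M, h M ∂μ)) := by
    refine tendsto_integral_of_dominated_convergence (fun _ => C)
      (fun k => (continuous_evP (p k)).aestronglyMeasurable) (integrable_const C) (fun k => ?_) ?_
    · filter_upwards [hae] with M hM using hpB k M hM
    · filter_upwards [hae] with M hM using hlim M hM
  have l2 : Tendsto (fun k => ∫ M, Real.exp (r * evP M (p k)) ∂μ) atTop
      (𝓝 (∫ M, Real.exp (r * h M) ∂μ)) := by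
    refine tendsto_integral_of_dominated_convergence (fun _ => Real.exp (|r| * C))
      (fun k => (Real.continuous_exp.comp
        (continuous_const.mul (continuous_evP (p k)))).aestronglyMeasurable)
      (integrable_const _) (fun k => ?_) ?_
    · filter_upwards [hae] with M hM
      rw [Real.norm_eq_abs, Real.abs_exp]
      refine Real.exp_le_exp.2 ((le_abs_self _).trans ?_)
      rw [abs_mul]
      exact mul_le_mul_of_nonneg_left (hpB k M hM) (abs_nonneg r)
    · filter_upwards [hae] with M hM
      exact (Real.continuous_exp.tendsto _).comp ((hlim M hM).const_mul r)
  exact le_of_tendsto_of_tendsto' l2 ((Real.continuous_exp.tendsto _).comp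
    ((l1.const_mul r).add_const _)) hmgf

end SOProof7

noncomputable section SOProof8

lemma one_side {n : ℕ} (hn : 3 ≤ n) {μ : Measure (Matrix (Fin n) (Fin n) ℝ)} (hμ : IsHaarSO n μ)
    {h : Matrix (Fin n) (Fin n) ℝ → ℝ} {L : ℝ} (hL : L ≠ 0)
    (hLip : ∀ M₁ ∈ SOset n, ∀ M₂ ∈ SOset n, |h M₁ - h M₂| ≤ L * frobNorm (M₁ - M₂))
    (hInt : Integrable h μ) (r : ℝ) (hr : 0 ≤ r) :
    μ.real {M | r ≤ h M - ∫ M', h M' ∂μ} ≤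
      Real.exp (-(r ^ 2 * ((n : ℝ) - 2)) / (8 * L ^ 2)) := by
  have := hμ.1
  have hn3 : (3 : ℝ) ≤ n := by exact_mod_cast hn
  have hn2 : (0 : ℝ) < (n : ℝ) - 2 := by linarith
  have hL2 : 0 < L ^ 2 := by positivity
  obtain ⟨D, hD⟩ := (isCompact_SO n).exists_bound_of_continuousOn
    (f := fun M => L * frobNorm (M - 1))
    (continuous_const.mul (continuous_frob.comp (by fun_prop))).continuousOn
  have hC : ∀ M ∈ SOset n, |h M| ≤ |h 1| + D := by
    intro M hM
    have a := hLip M hM 1 (one_mem_SO n)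
    have b := (le_abs_self _).trans (hD M hM)
    have c := abs_sub_abs_le_abs_sub (h M) (h 1)
    linarith
  set E := ∫ M', h M' ∂μ with hE
  set t : ℝ := r * ((n : ℝ) - 2) / (4 * L ^ 2) with ht
  have ht0 : 0 ≤ t := by positivity
  have hexp : Integrable (fun M => Real.exp (t * (h M - E))) μ := by
    refine Integrable.of_bound (C := Real.exp (t * (|h 1| + D - E)))
      (Real.continuous_exp.comp_aestronglyMeasurable
        ((hInt.1.sub aestronglyMeasurable_const).const_mul t)) ?_
    filter_upwards [ae_SO hμ] with M hM
    rw [Real.norm_eq_abs, Real.abs_exp]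
    refine Real.exp_le_exp.2 (mul_le_mul_of_nonneg_left ?_ ht0)
    linarith [(le_abs_self _).trans (hC M hM)]
  have ch := measure_ge_le_exp_mul_mgf (μ := μ) (X := fun M => h M - E) r ht0 hexp
  refine ch.trans ?_
  have hm : mgf (fun M => h M - E) μ t ≤ Real.exp (t ^ 2 * (4 * L ^ 2) / (2 * ((n : ℝ) - 2))) := by
    have hl := lip_mgf hn hμ hLip hC hInt t
    rw [← hE] at hl
    have e : mgf (fun M => h M - E) μ t = Real.exp (-(t * E)) * ∫ M, Real.exp (t * h M) ∂μ := by
      rw [mgf, ← integral_const_mul]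
      congr 1
      ext M
      rw [← Real.exp_add]
      ring_nf
    rw [e]
    refine (mul_le_mul_of_nonneg_left hl (Real.exp_pos _).le).trans (le_of_eq ?_)
    rw [← Real.exp_add]
    congr 1
    ring
  refine (mul_le_mul_of_nonneg_left hm (Real.exp_pos _).le).trans (le_of_eq ?_)
  rw [← Real.exp_add]
  congr 1
  rw [ht]
  field_simp
  ring

end SOProof8

/-- **Theorem (Meckes, adapted).** If `M` is Haar-distributed on `SO(n)` and
`h : SO(n) → ℝ` is `L`-Lipschitz in the Hilbert–Schmidt metric with `E[|h(M)|] < ∞`,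
then for every `r ≥ 0`, `P(|h(M) - E[h(M)]| ≥ r) ≤ 2 exp(-r²(n-2)/(8L²))`. -/
theorem so_concentration (n : ℕ)
    (μ : Measure (Matrix (Fin n) (Fin n) ℝ)) (hμ : IsHaarSO n μ)
    (h : Matrix (Fin n) (Fin n) ℝ → ℝ) (L : ℝ)
    (hLip : ∀ M₁ M₂ : Matrix (Fin n) (Fin n) ℝ,
      M₁ᵀ * M₁ = 1 → M₁.det = 1 → M₂ᵀ * M₂ = 1 → M₂.det = 1 →
      |h M₁ - h M₂| ≤ L * frobNorm (M₁ - M₂))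
    (hInt : Integrable h μ) :
    ∀ r : ℝ, 0 ≤ r →
      μ {M | r ≤ |h M - ∫ M', h M' ∂μ|} ≤
        ENNReal.ofReal (2 * Real.exp (-(r ^ 2 * ((n : ℝ) - 2)) / (8 * L ^ 2))) := by
  intro r hr
  have hprob := hμ.1
  have triv : 0 ≤ -(r ^ 2 * ((n : ℝ) - 2)) / (8 * L ^ 2) →
      μ {M | r ≤ |h M - ∫ M', h M' ∂μ|} ≤
        ENNReal.ofReal (2 * Real.exp (-(r ^ 2 * ((n : ℝ) - 2)) / (8 * L ^ 2))) := by
    intro h0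
    refine prob_le_one.trans ?_
    rw [← ENNReal.ofReal_one]
    refine ENNReal.ofReal_le_ofReal ?_
    linarith [Real.one_le_exp h0]
  by_cases hn : 3 ≤ n
  swap
  · refine triv (div_nonneg ?_ (by positivity))
    have : (n : ℝ) ≤ 2 := by exact_mod_cast (by omega : n ≤ 2)
    nlinarith [sq_nonneg r]
  by_cases hL : L = 0
  · exact triv (by simp [hL])
  have hLip2 : ∀ M₁ ∈ SOset n, ∀ M₂ ∈ SOset n, |h M₁ - h M₂| ≤ L * frobNorm (M₁ - M₂) :=
    fun M₁ h₁ M₂ h₂ => hLip M₁ M₂ h₁.1 h₁.2 h₂.1 h₂.2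
  have a := one_side hn hμ hL hLip2 hInt r hr
  have b := one_side hn hμ (h := fun M => - h M) hL
    (fun M₁ h₁ M₂ h₂ => by
      rw [neg_sub_neg, abs_sub_comm]
      exact hLip2 M₁ h₁ M₂ h₂) hInt.neg r hr
  have hsub : {M | r ≤ |h M - ∫ M', h M' ∂μ|} ⊆
      {M | r ≤ h M - ∫ M', h M' ∂μ} ∪ {M | r ≤ - h M - ∫ M', - h M' ∂μ} := by
    intro M hM
    simp only [Set.mem_ofPred_eq, Set.mem_union, integral_neg] at hM ⊢
    rcases le_abs.1 hM with h1 | h1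
    · exact Or.inl h1
    · right; linarith
  have hreal : μ.real {M | r ≤ |h M - ∫ M', h M' ∂μ|} ≤
      2 * Real.exp (-(r ^ 2 * ((n : ℝ) - 2)) / (8 * L ^ 2)) := by
    have c := (measureReal_mono (μ := μ) hsub).trans (measureReal_union_le _ _)
    linarith
  rw [← ofReal_measureReal]
  exact ENNReal.ofReal_le_ofReal hreal
end

section
/- For n ≥ 2, the distribution of the first n−1 columns of an n×n random orthogonal matrix is the same whether the matrix is distributed according to the Haar measure on O(n), the Haar measure on SO(n), or the Haar measure on SO⁻(n); i.e., the pushforwards of these three measures under the map deleting the last column all coincide. -/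
open MeasureTheory ProbabilityTheory Matrix Kronecker
open scoped ENNReal NNReal

theorem mat_meas_iff {α : Type*} [MeasurableSpace α] {m k : ℕ} (f : α → Matrix (Fin m) (Fin k) ℝ)
    (h : ∀ i j, Measurable (fun a => f a i j)) : Measurable f :=
  measurable_pi_lambda _ (fun i => measurable_pi_lambda _ (fun j => h i j))

theorem mat_meas_entry {m k : ℕ} (i : Fin m) (j : Fin k) :
    Measurable (fun M : Matrix (Fin m) (Fin k) ℝ => M i j) :=
  (measurable_pi_apply j).comp
    (measurable_pi_apply (X := fun _ : Fin m => Fin k → ℝ) i)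

theorem mat_meas_entry_comp {α : Type*} [MeasurableSpace α] {m k : ℕ}
    {f : α → Matrix (Fin m) (Fin k) ℝ} (hf : Measurable f) (i : Fin m) (j : Fin k) :
    Measurable (fun a => f a i j) := (mat_meas_entry i j).comp hf

theorem mat_meas_mul {α : Type*} [MeasurableSpace α] {n : ℕ}
    {f g : α → Matrix (Fin n) (Fin n) ℝ} (hf : Measurable f) (hg : Measurable g) :
    Measurable (fun a => f a * g a) := by
  apply mat_meas_iff
  intro i j
  simp only [Matrix.mul_apply]
  exact Finset.measurable_sum _ fun k _ =>
    (mat_meas_entry_comp hf i k).mul (mat_meas_entry_comp hg k j)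

theorem mat_meas_transpose {α : Type*} [MeasurableSpace α] {n : ℕ}
    {f : α → Matrix (Fin n) (Fin n) ℝ} (hf : Measurable f) :
    Measurable (fun a => (f a)ᵀ) :=
  mat_meas_iff _ fun i j => mat_meas_entry_comp hf j i

theorem mat_meas_det {n : ℕ} :
    Measurable (fun M : Matrix (Fin n) (Fin n) ℝ => M.det) := by
  simp only [Matrix.det_apply']
  exact Finset.measurable_sum _ fun σ _ =>
    (Finset.measurable_prod _ fun i _ => mat_meas_entry _ _).const_mul _

theorem haar_transpose {n : ℕ} {μ : Measure (Matrix (Fin n) (Fin n) ℝ)} (hμ : IsHaarO n μ)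
    {A : Set (Matrix (Fin n) (Fin n) ℝ)} (hA : MeasurableSet A) :
    μ ((fun M => Mᵀ) ⁻¹' A) = μ A := by
  obtain ⟨hp, hs, hi⟩ := hμ
  have key : ∀ B : Set (Matrix (Fin n) (Fin n) ℝ), MeasurableSet B →
      ∫⁻ N, μ {M | Nᵀ * M ∈ B} ∂μ = μ B := by
    intro B hB
    have : ∀ᵐ N ∂μ, μ {M | Nᵀ * M ∈ B} = μ B := by
      filter_upwards [hs] with N hN
      have hN' : (Nᵀ)ᵀ * Nᵀ = 1 := by
        rw [Matrix.transpose_transpose]; exact mul_eq_one_comm.mp hN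
      conv_rhs => rw [← hi _ hN']
      rw [Measure.map_apply (mat_meas_mul measurable_const measurable_id')  hB]
      rfl
    rw [lintegral_congr_ae this]
    simp
  have hAT : MeasurableSet ((fun M : Matrix (Fin n) (Fin n) ℝ => Mᵀ) ⁻¹' A) :=
    mat_meas_transpose measurable_id hA
  have hS : MeasurableSet {p : Matrix (Fin n) (Fin n) ℝ × Matrix (Fin n) (Fin n) ℝ |
      p.1ᵀ * p.2 ∈ A} :=
    mat_meas_mul (mat_meas_transpose measurable_fst) measurable_snd hA
  rw [← key _ hAT, ← key _ hA]
  have h1 := Measure.prod_apply (μ := μ) (ν := μ) hS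
  have h2 := Measure.prod_apply_symm (μ := μ) (ν := μ) hS
  rw [h1] at h2
  refine Eq.trans ?_ h2.symm
  refine lintegral_congr fun M => ?_
  congr 1
  ext N
  simp [Matrix.transpose_mul]

theorem haar_right {n : ℕ} {μ : Measure (Matrix (Fin n) (Fin n) ℝ)} (hμ : IsHaarO n μ)
    {R : Matrix (Fin n) (Fin n) ℝ} (hR : Rᵀ * R = 1)
    {A : Set (Matrix (Fin n) (Fin n) ℝ)} (hA : MeasurableSet A) :
    μ ((fun M => M * R) ⁻¹' A) = μ A := by
  have hAT : MeasurableSet ((fun M : Matrix (Fin n) (Fin n) ℝ => Mᵀ) ⁻¹' A) :=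
    mat_meas_transpose measurable_id hA
  have hR' : (Rᵀ)ᵀ * Rᵀ = 1 := by
    rw [Matrix.transpose_transpose]; exact mul_eq_one_comm.mp hR
  rw [← haar_transpose hμ (mat_meas_mul measurable_id' measurable_const hA),
    ← haar_transpose hμ hA]
  conv_rhs => rw [← hμ.2.2 _ hR']
  rw [Measure.map_apply (mat_meas_mul measurable_const measurable_id')  hAT]
  congr 1
  ext M
  simp [Matrix.transpose_mul]

theorem cond_cols {n : ℕ} (hn : 2 ≤ n)
    {μ : Measure (Matrix (Fin n) (Fin n) ℝ)} (hμ : IsHaarO n μ) (e : ℝ) (he : e = 1 ∨ e = -1) :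
    (μ[|{M | M.det = e}]).map
        (fun M : Matrix (Fin n) (Fin n) ℝ => M.submatrix id (Fin.castLE (Nat.sub_le n 1))) =
      μ.map
        (fun M : Matrix (Fin n) (Fin n) ℝ => M.submatrix id (Fin.castLE (Nat.sub_le n 1))) := by
  have hp : IsProbabilityMeasure μ := hμ.1
  have hf : Measurable (fun M : Matrix (Fin n) (Fin n) ℝ =>
      M.submatrix id (Fin.castLE (Nat.sub_le n 1))) :=
    mat_meas_iff _ fun i j => mat_meas_entry _ _
  have hE : ∀ c : ℝ, MeasurableSet {M : Matrix (Fin n) (Fin n) ℝ | M.det = c} := fun c =>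
    mat_meas_det (measurableSet_singleton c)
  let l : Fin n := ⟨n - 1, by omega⟩
  let d : Fin n → ℝ := fun i => if i = l then -1 else 1
  have hR : (Matrix.diagonal d)ᵀ * Matrix.diagonal d = 1 := by
    rw [Matrix.diagonal_transpose, Matrix.diagonal_mul_diagonal, ← Matrix.diagonal_one]
    congr 1
    ext i
    simp only [d]
    split_ifs <;> norm_num
  have hdet : (Matrix.diagonal d).det = -1 := by
    rw [Matrix.det_diagonal]
    simp [d, Finset.prod_ite_eq']
  have half : ∀ B : Set (Matrix (Fin n) (Fin (n - 1)) ℝ), MeasurableSet B →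
      μ ({M | M.det = e} ∩ (fun M : Matrix (Fin n) (Fin n) ℝ =>
        M.submatrix id (Fin.castLE (Nat.sub_le n 1))) ⁻¹' B) * 2 =
      μ ((fun M : Matrix (Fin n) (Fin n) ℝ =>
        M.submatrix id (Fin.castLE (Nat.sub_le n 1))) ⁻¹' B) := by
    intro B hB
    set F := (fun M : Matrix (Fin n) (Fin n) ℝ =>
        M.submatrix id (Fin.castLE (Nat.sub_le n 1))) with hF
    have hsw : μ ({M | M.det = -e} ∩ F ⁻¹' B) = μ ({M | M.det = e} ∩ F ⁻¹' B) := by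
      rw [← haar_right hμ hR ((hE e).inter (hf hB))]
      congr 1
      ext M
      have h1 : F (M * Matrix.diagonal d) = F M := by
        ext i j
        simp only [hF, Matrix.submatrix_apply, Matrix.mul_diagonal, d]
        rw [if_neg, mul_one]
        intro h
        have := congrArg Fin.val h
        simp [l] at this
        omega
      simp only [Set.mem_inter_iff, Set.mem_preimage, Set.mem_ofPred_eq, h1, Matrix.det_mul, hdet]
      constructor
      · rintro ⟨a, b⟩; exact ⟨by linarith, b⟩
      · rintro ⟨a, b⟩; exact ⟨by linarith, b⟩
    rw [mul_two]
    nth_rewrite 2 [← hsw]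
    rw [← measure_union]
    · apply measure_congr
      filter_upwards [hμ.2.1] with M hM
      have hd : M.det = 1 ∨ M.det = -1 := by
        have := congrArg Matrix.det hM
        rw [Matrix.det_mul, Matrix.det_transpose, Matrix.det_one] at this
        exact mul_self_eq_one_iff.mp this
      apply propext
      change (M.det = e ∧ F M ∈ B ∨ M.det = -e ∧ F M ∈ B) ↔ F M ∈ B
      rcases he with rfl | rfl
      · tauto
      · rw [neg_neg]; tauto
    · rw [Set.disjoint_left]
      rintro M ⟨a, _⟩ ⟨b, _⟩
      simp only [Set.mem_ofPred_eq] at a b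
      rcases he with rfl | rfl <;> linarith
    · exact (hE _).inter (hf hB)
  have hm : μ {M | M.det = e} * 2 = 1 := by
    have := half Set.univ MeasurableSet.univ
    simpa using this
  ext B hB
  rw [Measure.map_apply hf hB, Measure.map_apply hf hB, cond_apply (hE e), ← half B hB]
  have : (μ {M | M.det = e})⁻¹ = 2 := by
    rw [ENNReal.eq_inv_of_mul_eq_one_left hm, inv_inv]
  rw [this, mul_comm]

/-- **Lemma.** For `n ≥ 2`, the distribution of the first `n-1` columns of a Haar
orthogonal matrix is the same whether the matrix is Haar-distributed on `O(n)`, on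
`SO(n)` (the conditional measure on `det = 1`), or on `SO⁻(n)` (the conditional measure
on `det = -1`). -/
theorem first_columns_distribution_eq (n : ℕ) (hn : 2 ≤ n)
    (μ : Measure (Matrix (Fin n) (Fin n) ℝ)) (hμ : IsHaarO n μ) :
    (μ[|{M | M.det = 1}]).map
        (fun M : Matrix (Fin n) (Fin n) ℝ => M.submatrix id (Fin.castLE (Nat.sub_le n 1))) =
      μ.map
        (fun M : Matrix (Fin n) (Fin n) ℝ => M.submatrix id (Fin.castLE (Nat.sub_le n 1))) ∧
    (μ[|{M | M.det = -1}]).map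
        (fun M : Matrix (Fin n) (Fin n) ℝ => M.submatrix id (Fin.castLE (Nat.sub_le n 1))) =
      μ.map
        (fun M : Matrix (Fin n) (Fin n) ℝ => M.submatrix id (Fin.castLE (Nat.sub_le n 1))) := by
  exact ⟨cond_cols hn hμ 1 (Or.inl rfl), cond_cols hn hμ (-1) (Or.inr rfl)⟩
end

section
/- Let n = max(k, m) ≥ 3, let W be an m×k random matrix distributed according to the SUO distribution, and let z, z' ∈ ℝ^k. Let R be a k×k orthogonal matrix mapping z and z' into the span of the first two standard basis vectors, and set (v, v') = (Rz, Rz'). Then (Wz, Wz') has the same joint distribution as (Vv, Vv'), where V = √(n/k)·M₀ and M₀ is the top-left m×k submatrix of a random matrix M distributed according to the Haar measure on SO(n). -/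
open MeasureTheory ProbabilityTheory Matrix Kronecker
open scoped ENNReal NNReal

lemma SUOaux.meas_entry {m n : ℕ} (i : Fin m) (j : Fin n) :
    Measurable (fun M : Matrix (Fin m) (Fin n) ℝ => M i j) := by
  have h1 : Measurable (fun M : Fin m → Fin n → ℝ => M i) := measurable_pi_apply i
  have h2 : Measurable (fun r : Fin n → ℝ => r j) := measurable_pi_apply j
  exact h2.comp h1

lemma SUOaux.meas_mul (n : ℕ) :
    Measurable (fun p : Matrix (Fin n) (Fin n) ℝ × Matrix (Fin n) (Fin n) ℝ => p.1 * p.2) := by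
  refine measurable_pi_lambda _ fun i => measurable_pi_lambda _ fun j => ?_
  simp only [Matrix.mul_apply]
  refine Finset.measurable_sum _ fun l _ => ?_
  exact ((SUOaux.meas_entry i l).comp measurable_fst).mul
    ((SUOaux.meas_entry l j).comp measurable_snd)

lemma SUOaux.meas_tr (n : ℕ) :
    Measurable (fun M : Matrix (Fin n) (Fin n) ℝ => Mᵀ) := by
  refine measurable_pi_lambda _ fun i => measurable_pi_lambda _ fun j => ?_
  exact SUOaux.meas_entry j i

lemma SUOaux.meas_mulVec (m n : ℕ) (a : Fin n → ℝ) :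
    Measurable (fun M : Matrix (Fin m) (Fin n) ℝ => M.mulVec a) := by
  refine measurable_pi_lambda _ fun i => ?_
  simp only [Matrix.mulVec, dotProduct]
  refine Finset.measurable_sum _ fun l _ => ?_
  exact (SUOaux.meas_entry i l).mul_const _

lemma SUOaux.meas_suo {m k n : ℕ} (hm : m ≤ n) (hk : k ≤ n) :
    Measurable (suoOfHaar hm hk) := by
  refine measurable_pi_lambda _ fun i => measurable_pi_lambda _ fun j => ?_
  simp only [suoOfHaar, Matrix.smul_apply, Matrix.submatrix_apply, smul_eq_mul]
  exact (SUOaux.meas_entry _ _).const_mul _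

lemma SUOaux.meas_lmul (n : ℕ) (Q : Matrix (Fin n) (Fin n) ℝ) :
    Measurable (fun M : Matrix (Fin n) (Fin n) ℝ => Q * M) :=
  (SUOaux.meas_mul n).comp (measurable_const.prodMk measurable_id)

lemma SUOaux.left {n : ℕ} {μ : Measure (Matrix (Fin n) (Fin n) ℝ)}
    {Q : Matrix (Fin n) (Fin n) ℝ} (h : μ.map (fun M => Q * M) = μ)
    {g : Matrix (Fin n) (Fin n) ℝ → ℝ≥0∞} (hg : Measurable g) :
    ∫⁻ M, g (Q * M) ∂μ = ∫⁻ M, g M ∂μ := by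
  conv_rhs => rw [← h]
  rw [lintegral_map hg (SUOaux.meas_lmul n Q)]

lemma SUOaux.tr {n : ℕ} {μ : Measure (Matrix (Fin n) (Fin n) ℝ)} (hμ : IsHaarSO n μ)
    {g : Matrix (Fin n) (Fin n) ℝ → ℝ≥0∞} (hg : Measurable g) :
    ∫⁻ M, g Mᵀ ∂μ = ∫⁻ M, g M ∂μ := by
  obtain ⟨hp, hs, hl⟩ := hμ
  have h1 : ∫⁻ Q, ∫⁻ M, g (Qᵀ * M) ∂μ ∂μ = ∫⁻ M, g M ∂μ := by
    rw [lintegral_congr_ae (g := fun _ => ∫⁻ M, g M ∂μ)]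
    · simp
    · filter_upwards [hs] with Q hQ
      exact SUOaux.left (hl Qᵀ (by rw [transpose_transpose]; exact mul_eq_one_comm.mp hQ.1)
        (by rw [det_transpose]; exact hQ.2)) hg
  have h2 : ∫⁻ M, ∫⁻ Q, g (Qᵀ * M) ∂μ ∂μ = ∫⁻ M, g Mᵀ ∂μ := by
    rw [lintegral_congr_ae (g := fun _ => ∫⁻ M, g Mᵀ ∂μ)]
    · simp
    · filter_upwards [hs] with M hM
      have := SUOaux.left (hl Mᵀ (by rw [transpose_transpose]; exact mul_eq_one_comm.mp hM.1)
        (by rw [det_transpose]; exact hM.2)) (hg.comp (SUOaux.meas_tr n))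
      simpa [Function.comp_def, transpose_mul] using this
  rw [← h1, ← h2]
  refine lintegral_lintegral_swap ?_
  refine Measurable.aemeasurable ?_
  exact hg.comp ((SUOaux.meas_mul n).comp
    (measurable_snd.comp measurable_id |>.comp measurable_id |> fun h =>
      ((SUOaux.meas_tr n).comp h).prodMk measurable_fst))

lemma SUOaux.right {n : ℕ} {μ : Measure (Matrix (Fin n) (Fin n) ℝ)} (hμ : IsHaarSO n μ)
    {g : Matrix (Fin n) (Fin n) ℝ → ℝ≥0∞} (hg : Measurable g)
    (P : Matrix (Fin n) (Fin n) ℝ) (hP : Pᵀ * P = 1) (hd : P.det = 1) :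
    ∫⁻ M, g (M * P) ∂μ = ∫⁻ M, g M ∂μ := by
  have hm : Measurable fun M => g (M * P) :=
    hg.comp ((SUOaux.meas_mul n).comp (measurable_id.prodMk measurable_const))
  rw [← SUOaux.tr hμ hm, ← SUOaux.tr hμ hg]
  have := SUOaux.left (hμ.2.2 Pᵀ (by rw [transpose_transpose]; exact mul_eq_one_comm.mp hP)
        (by rw [det_transpose]; exact hd)) (hg.comp (SUOaux.meas_tr n))
  simpa [Function.comp_def, transpose_mul] using this

lemma SUOaux.core {n : ℕ} {μO μ : Measure (Matrix (Fin n) (Fin n) ℝ)} (hO : IsHaarO n μO)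
    (hμ : IsHaarSO n μ) (a b v w : Fin n → ℝ) (S D : Matrix (Fin n) (Fin n) ℝ)
    (hS : Sᵀ * S = 1) (hD : Dᵀ * D = 1) (hDd : D.det = -1)
    (hv : S *ᵥ a = v) (hw : S *ᵥ b = w) (hDv : D *ᵥ v = v) (hDw : D *ᵥ w = w)
    {g : (Fin n → ℝ) × (Fin n → ℝ) → ℝ≥0∞} (hg : Measurable g) :
    ∫⁻ M, g (M *ᵥ a, M *ᵥ b) ∂μO = ∫⁻ M, g (M *ᵥ v, M *ᵥ w) ∂μ := by
  have hF : ∀ x y : Fin n → ℝ, Measurable fun M : Matrix (Fin n) (Fin n) ℝ =>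
      g (M *ᵥ x, M *ᵥ y) := fun x y =>
    hg.comp ((SUOaux.meas_mulVec n n x).prodMk (SUOaux.meas_mulVec n n y))
  have hpO := hO.1
  have hp := hμ.1
  have h1 : ∫⁻ Q, ∫⁻ M, g ((Q * M) *ᵥ a, (Q * M) *ᵥ b) ∂μO ∂μ
      = ∫⁻ M, g (M *ᵥ a, M *ᵥ b) ∂μO := by
    rw [lintegral_congr_ae (g := fun _ => ∫⁻ M, g (M *ᵥ a, M *ᵥ b) ∂μO)]
    · simp
    · filter_upwards [hμ.2.1] with Q hQ
      exact SUOaux.left (hO.2.2 Q hQ.1) (hF a b)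
  have h2 : ∫⁻ M, ∫⁻ Q, g ((Q * M) *ᵥ a, (Q * M) *ᵥ b) ∂μ ∂μO
      = ∫⁻ M, g (M *ᵥ v, M *ᵥ w) ∂μ := by
    rw [lintegral_congr_ae (g := fun _ => ∫⁻ M, g (M *ᵥ v, M *ᵥ w) ∂μ)]
    · simp
    · filter_upwards [hO.2.1] with M hM
      have hva : Sᵀ *ᵥ v = a := by rw [← hv, mulVec_mulVec, hS, one_mulVec]
      have hwb : Sᵀ *ᵥ w = b := by rw [← hw, mulVec_mulVec, hS, one_mulVec]
      have hS' : S * Sᵀ = 1 := mul_eq_one_comm.mp hS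
      have key : ∃ P : Matrix (Fin n) (Fin n) ℝ, Pᵀ * P = 1 ∧ P.det = 1 ∧
          P *ᵥ v = M *ᵥ a ∧ P *ᵥ w = M *ᵥ b := by
        have hP0 : (M * Sᵀ)ᵀ * (M * Sᵀ) = 1 := by
          rw [transpose_mul, transpose_transpose, Matrix.mul_assoc, ← Matrix.mul_assoc Mᵀ, hM,
            Matrix.one_mul, hS']
        have hdet : (M * Sᵀ).det * (M * Sᵀ).det = 1 := by
          have := congrArg det hP0
          rwa [det_mul, det_transpose, det_one] at this
        rcases mul_self_eq_one_iff.mp hdet with h | h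
        · exact ⟨M * Sᵀ, hP0, h, by rw [← mulVec_mulVec, hva], by rw [← mulVec_mulVec, hwb]⟩
        · refine ⟨M * Sᵀ * D, ?_, ?_, ?_, ?_⟩
          · rw [transpose_mul, Matrix.mul_assoc, ← Matrix.mul_assoc (M * Sᵀ)ᵀ, hP0,
              Matrix.one_mul, hD]
          · rw [det_mul, h, hDd]; norm_num
          · rw [← mulVec_mulVec, hDv, ← mulVec_mulVec, hva]
          · rw [← mulVec_mulVec, hDw, ← mulVec_mulVec, hwb]
      obtain ⟨P, hP, hPd, hPv, hPw⟩ := key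
      have := SUOaux.right hμ (hF v w) P hP hPd
      simp only [← mulVec_mulVec, hPv, hPw] at this
      simpa only [← mulVec_mulVec] using this
  rw [← h1, ← h2]
  refine lintegral_lintegral_swap ?_
  exact ((hF a b).comp (SUOaux.meas_mul n)).aemeasurable

lemma SUOaux.suo_mulVec {m k d : ℕ} (hm : m ≤ k + d) (hk : k ≤ k + d)
    (M : Matrix (Fin (k + d)) (Fin (k + d)) ℝ) (z : Fin k → ℝ) :
    (suoOfHaar hm hk M) *ᵥ z = fun i => Real.sqrt (((k + d : ℕ) : ℝ) / (k : ℝ)) *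
      (M *ᵥ (Fin.append z (0 : Fin d → ℝ))) (Fin.castLE hm i) := by
  ext i
  simp only [suoOfHaar, smul_mulVec, Pi.smul_apply, smul_eq_mul]
  congr 1
  simp only [mulVec, dotProduct, Fin.sum_univ_add, Fin.append_left, Fin.append_right]
  simp
  rfl

lemma SUOaux.gen (m k n : ℕ) (hm : m ≤ n) (hk : k ≤ n) (hn : 3 ≤ n)
    (z z' : Fin k → ℝ)
    (R : Matrix (Fin k) (Fin k) ℝ) (hR : Rᵀ * R = 1)
    (hRz : ∀ i : Fin k, 2 ≤ (i : ℕ) → R.mulVec z i = 0)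
    (hRz' : ∀ i : Fin k, 2 ≤ (i : ℕ) → R.mulVec z' i = 0)
    (μO μ : Measure (Matrix (Fin n) (Fin n) ℝ))
    (hO : IsHaarO n μO) (hμ : IsHaarSO n μ) :
    (μO.map (suoOfHaar hm hk)).map (fun W => (W.mulVec z, W.mulVec z')) =
      μ.map (fun M =>
        ((suoOfHaar hm hk M).mulVec (R.mulVec z),
         (suoOfHaar hm hk M).mulVec (R.mulVec z'))) := by
  obtain ⟨d, rfl⟩ := Nat.exists_eq_add_of_le hk
  have hpair : ∀ x y : Fin k → ℝ, Measurable
      (fun W : Matrix (Fin m) (Fin k) ℝ => (W.mulVec x, W.mulVec y)) := fun x y =>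
    (SUOaux.meas_mulVec m k x).prodMk (SUOaux.meas_mulVec m k y)
  refine Measure.ext_of_lintegral _ fun f hf => ?_
  rw [lintegral_map hf (hpair z z'),
    lintegral_map (f := fun W : Matrix (Fin m) (Fin k) ℝ => f (W *ᵥ z, W *ᵥ z'))
      (hf.comp (hpair z z')) (SUOaux.meas_suo hm hk),
    lintegral_map (g := fun M => (suoOfHaar hm hk M *ᵥ R *ᵥ z, suoOfHaar hm hk M *ᵥ R *ᵥ z'))
      hf ((hpair (R *ᵥ z) (R *ᵥ z')).comp (SUOaux.meas_suo hm hk))]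
  simp only [Function.comp_apply, SUOaux.suo_mulVec]
  set c := Real.sqrt (((k + d : ℕ) : ℝ) / (k : ℝ))
  let S : Matrix (Fin (k + d)) (Fin (k + d)) ℝ :=
    (fromBlocks R 0 0 (1 : Matrix (Fin d) (Fin d) ℝ)).submatrix finSumFinEquiv.symm
      finSumFinEquiv.symm
  let l : Fin (k + d) := ⟨k + d - 1, by omega⟩
  let D : Matrix (Fin (k + d)) (Fin (k + d)) ℝ :=
    diagonal (fun i => if i = l then -1 else 1)
  have hSx : ∀ x : Fin k → ℝ, S *ᵥ Fin.append x (0 : Fin d → ℝ) = Fin.append (R *ᵥ x) 0 := by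
    intro x
    ext i
    refine Fin.addCases (fun i => ?_) (fun i => ?_) i
    · simp [S, mulVec, dotProduct, Fin.sum_univ_add]
    · simp [S, mulVec, dotProduct, Fin.sum_univ_add]
  have hDx : ∀ x : Fin k → ℝ, (∀ i : Fin k, 2 ≤ (i : ℕ) → x i = 0) →
      D *ᵥ Fin.append x (0 : Fin d → ℝ) = Fin.append x 0 := by
    intro x hx
    ext i
    simp only [D, mulVec_diagonal]
    split_ifs with h
    · have hi : 2 ≤ (i : ℕ) := by rw [h]; simp only [l]; omega
      have : Fin.append x (0 : Fin d → ℝ) i = 0 := by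
        clear h
        revert hi
        refine Fin.addCases (fun i => ?_) (fun i => ?_) i
        · intro hi
          simpa using hx i (by simpa using hi)
        · intro hi
          simp
      rw [this]; simp
    · simp
  have hg : Measurable fun p : (Fin (k + d) → ℝ) × (Fin (k + d) → ℝ) =>
      f (fun i : Fin m => c * p.1 (Fin.castLE hm i), fun i : Fin m => c * p.2 (Fin.castLE hm i)) := by
    refine hf.comp (Measurable.prodMk ?_ ?_)
    · exact measurable_pi_lambda _ fun i =>
        ((measurable_pi_apply _).comp measurable_fst).const_mul _
    · exact measurable_pi_lambda _ fun i =>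
        ((measurable_pi_apply _).comp measurable_snd).const_mul _
  refine SUOaux.core hO hμ _ _ _ _ S D ?_ ?_ ?_ (hSx z) (hSx z') (hDx _ hRz) (hDx _ hRz') hg
  · simp only [S, transpose_submatrix, submatrix_mul_equiv, fromBlocks_transpose,
      fromBlocks_multiply]
    simp [hR]
  · simp only [D, diagonal_transpose, diagonal_mul_diagonal]
    rw [← diagonal_one]
    congr 1
    ext i
    split_ifs <;> norm_num
  · simp [D, det_diagonal, Finset.prod_ite_eq]

/-- **Lemma.** For `n = max k m ≥ 3` and SUO-distributed `W`, if `R` is orthogonal and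
maps `z, z'` into the span of the first two standard basis vectors, with
`(v, v') = (Rz, Rz')`, then `(Wz, Wz')` is distributed as `(Vv, Vv')` where
`V = √(n/k)·M₀` and `M₀` is the top-left `m × k` submatrix of a Haar-distributed
`M ∈ SO(n)`. -/
theorem suo_pair_as_so_pair (m k : ℕ) (hm : 0 < m) (hk : 0 < k) (hn : 3 ≤ max k m)
    (ν : Measure (Matrix (Fin m) (Fin k) ℝ)) (hν : IsSUO m k ν)
    (z z' : Fin k → ℝ)
    (R : Matrix (Fin k) (Fin k) ℝ) (hR : Rᵀ * R = 1)
    (hRz : ∀ i : Fin k, 2 ≤ (i : ℕ) → R.mulVec z i = 0)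
    (hRz' : ∀ i : Fin k, 2 ≤ (i : ℕ) → R.mulVec z' i = 0)
    (μ : Measure (Matrix (Fin (max k m)) (Fin (max k m)) ℝ))
    (hμ : IsHaarSO (max k m) μ) :
    ν.map (fun W => (W.mulVec z, W.mulVec z')) =
      μ.map (fun M =>
        ((suoOfHaar (le_max_right k m) (le_max_left k m) M).mulVec (R.mulVec z),
         (suoOfHaar (le_max_right k m) (le_max_left k m) M).mulVec (R.mulVec z'))) := by
  obtain ⟨μO, hO, rfl⟩ := hν
  exact SUOaux.gen m k _ _ _ hn z z' R hR hRz hRz' μO μ hO hμ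
end

section
/- Let φ : ℝ → ℝ be differentiable with ‖φ‖_∞ ≤ C and ‖φ'‖_∞ ≤ C, let n = max(k, m), and let v, v' ∈ ℝ^k satisfy ‖v‖² = ‖v'‖² = k. Define h : SO(n) → ℝ by h(M) = (1/m) φ(Vv)ᵀ φ(Vv'), where V = √(n/k)·M₀ and M₀ is the top-left m×k submatrix of M. Then h is Lipschitz-continuous with respect to the Hilbert–Schmidt metric on SO(n) with Lipschitz constant at most 2C²√n/√m. -/
open MeasureTheory ProbabilityTheory Matrix Kronecker
open scoped ENNReal NNReal

theorem aux_row_bound {m k n : ℕ} (hm : m ≤ n) (hkn : k ≤ n) (hk : 0 < k)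
    (v : Fin k → ℝ) (hv : v ⬝ᵥ v = (k : ℝ)) (M₁ M₂ : Matrix (Fin n) (Fin n) ℝ) :
    ∑ i, |(suoOfHaar hm hkn M₁).mulVec v i - (suoOfHaar hm hkn M₂).mulVec v i| ≤
      Real.sqrt m * Real.sqrt n * frobNorm (M₁ - M₂) := by
  have hk' : (0 : ℝ) < k := by exact_mod_cast hk
  have hrow : ∀ i : Fin m,
      ((suoOfHaar hm hkn M₁).mulVec v i - (suoOfHaar hm hkn M₂).mulVec v i) ^ 2 ≤
        n * ∑ j, ((M₁ - M₂) (Fin.castLE hm i) j) ^ 2 := by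
    intro i
    have e : (suoOfHaar hm hkn M₁).mulVec v i - (suoOfHaar hm hkn M₂).mulVec v i =
        Real.sqrt ((n : ℝ) / k) *
          ∑ j, (M₁ - M₂) (Fin.castLE hm i) (Fin.castLE hkn j) * v j := by
      simp only [suoOfHaar, Matrix.mulVec, dotProduct, Matrix.smul_apply,
        Matrix.submatrix_apply, smul_eq_mul, Matrix.sub_apply, Finset.mul_sum]
      rw [← Finset.sum_sub_distrib]
      exact Finset.sum_congr rfl fun j _ => by ring
    rw [e, mul_pow, Real.sq_sqrt (by positivity)]
    have cs := Finset.sum_mul_sq_le_sq_mul_sq Finset.univ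
      (fun j => (M₁ - M₂) (Fin.castLE hm i) (Fin.castLE hkn j)) v
    have hv2 : ∑ j, v j ^ 2 = (k : ℝ) := by
      rw [← hv]; exact Finset.sum_congr rfl fun j _ => by ring
    rw [hv2] at cs
    have hsub : ∑ j, ((M₁ - M₂) (Fin.castLE hm i) (Fin.castLE hkn j)) ^ 2 ≤
        ∑ j, ((M₁ - M₂) (Fin.castLE hm i) j) ^ 2 := by
      refine (Finset.sum_map Finset.univ (Fin.castLEEmb hkn)
        (fun j => ((M₁ - M₂) (Fin.castLE hm i) j) ^ 2)).symm.trans_le ?_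
      exact Finset.sum_le_sum_of_subset_of_nonneg (Finset.subset_univ _)
        fun _ _ _ => sq_nonneg _
    calc _ ≤ (n : ℝ) / k * ((∑ j, ((M₁ - M₂) (Fin.castLE hm i) j) ^ 2) * k) := by
            refine mul_le_mul_of_nonneg_left (cs.trans ?_) (by positivity)
            exact mul_le_mul_of_nonneg_right hsub hk'.le
      _ = _ := by field_simp
  have hsum : ∑ i : Fin m, ∑ j, ((M₁ - M₂) (Fin.castLE hm i) j) ^ 2 ≤
      ∑ i, ∑ j, ((M₁ - M₂) i j) ^ 2 := by
    refine (Finset.sum_map Finset.univ (Fin.castLEEmb hm)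
        (fun i => ∑ j, ((M₁ - M₂) i j) ^ 2)).symm.trans_le ?_
    exact Finset.sum_le_sum_of_subset_of_nonneg (Finset.subset_univ _)
      fun _ _ _ => Finset.sum_nonneg fun _ _ => sq_nonneg _
  rw [frobNorm, ← Real.sqrt_mul (by positivity), ← Real.sqrt_mul (by positivity)]
  apply Real.le_sqrt_of_sq_le
  refine sq_sum_le_card_mul_sum_sq.trans ?_
  simp only [sq_abs, Finset.card_univ, Fintype.card_fin]
  rw [mul_assoc]
  refine mul_le_mul_of_nonneg_left ?_ (by positivity)
  calc _ ≤ ∑ i : Fin m, (n : ℝ) * ∑ j, ((M₁ - M₂) (Fin.castLE hm i) j) ^ 2 :=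
        Finset.sum_le_sum fun i _ => hrow i
    _ = n * ∑ i : Fin m, ∑ j, ((M₁ - M₂) (Fin.castLE hm i) j) ^ 2 := by
        rw [Finset.mul_sum]
    _ ≤ _ := mul_le_mul_of_nonneg_left hsum (by positivity)

/-- **Lemma.** For differentiable `φ` with `‖φ‖_∞, ‖φ'‖_∞ ≤ C`, `n = max k m`, and
`v, v'` with `‖v‖² = ‖v'‖² = k`, the function `h(M) = (1/m) φ(Vv)ᵀ φ(Vv')` (with
`V = √(n/k)·M₀`, `M₀` the top-left `m × k` submatrix of `M`) is Lipschitz on `SO(n)`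
in the Hilbert–Schmidt metric with constant at most `2C²√n/√m`. -/
theorem so_kernel_lipschitz (m k : ℕ) (hm : 0 < m) (hk : 0 < k)
    (φ : ℝ → ℝ) (C : ℝ) (hφdiff : Differentiable ℝ φ)
    (hφ : ∀ x, |φ x| ≤ C) (hφ' : ∀ x, |deriv φ x| ≤ C)
    (v v' : Fin k → ℝ) (hv : v ⬝ᵥ v = (k : ℝ)) (hv' : v' ⬝ᵥ v' = (k : ℝ)) :
    ∀ M₁ M₂ : Matrix (Fin (max k m)) (Fin (max k m)) ℝ,
      M₁ᵀ * M₁ = 1 → M₁.det = 1 → M₂ᵀ * M₂ = 1 → M₂.det = 1 →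
      |kernelF φ (suoOfHaar (le_max_right k m) (le_max_left k m) M₁) v v' -
          kernelF φ (suoOfHaar (le_max_right k m) (le_max_left k m) M₂) v v'| ≤
        2 * C ^ 2 * Real.sqrt ((max k m : ℕ) : ℝ) / Real.sqrt m *
          frobNorm (M₁ - M₂) := by
  intro M₁ M₂ _ _ _ _
  have hC : 0 ≤ C := (abs_nonneg _).trans (hφ 0)
  have hm' : (0 : ℝ) < m := by exact_mod_cast hm
  have hlip : ∀ x y, |φ x - φ y| ≤ C * |x - y| := by
    intro x y
    have := Convex.norm_image_sub_le_of_norm_deriv_le (f := φ) (s := Set.univ) (C := C)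
      (fun z _ => hφdiff z) (fun z _ => hφ' z) convex_univ (Set.mem_univ y) (Set.mem_univ x)
    simpa [Real.norm_eq_abs] using this
  have b1 := aux_row_bound (le_max_right k m) (le_max_left k m) hk v hv M₁ M₂
  have b2 := aux_row_bound (le_max_right k m) (le_max_left k m) hk v' hv' M₁ M₂
  generalize suoOfHaar (le_max_right k m) (le_max_left k m) M₁ = A at *
  generalize suoOfHaar (le_max_right k m) (le_max_left k m) M₂ = B at *
  generalize frobNorm (M₁ - M₂) = F at *
  have hterm : ∀ i, |φ (A.mulVec v i) * φ (A.mulVec v' i) - φ (B.mulVec v i) * φ (B.mulVec v' i)|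
      ≤ C ^ 2 * |A.mulVec v i - B.mulVec v i| + C ^ 2 * |A.mulVec v' i - B.mulVec v' i| := by
    intro i
    generalize A.mulVec v i = a
    generalize A.mulVec v' i = a'
    generalize B.mulVec v i = b
    generalize B.mulVec v' i = b'
    calc |φ a * φ a' - φ b * φ b'| = |(φ a - φ b) * φ a' + φ b * (φ a' - φ b')| := by
          congr 1; ring
      _ ≤ |φ a - φ b| * |φ a'| + |φ b| * |φ a' - φ b'| := by
          rw [← abs_mul, ← abs_mul]; exact abs_add_le _ _
      _ ≤ (C * |a - b|) * C + C * (C * |a' - b'|) := by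
          gcongr
          · exact hlip a b
          · exact hφ a'
          · exact hφ b
          · exact hlip a' b'
      _ = _ := by ring
  have hs : |∑ i, φ (A.mulVec v i) * φ (A.mulVec v' i)
      - ∑ i, φ (B.mulVec v i) * φ (B.mulVec v' i)|
      ≤ 2 * C ^ 2 * (Real.sqrt m * Real.sqrt ((max k m : ℕ) : ℝ) * F) := by
    rw [← Finset.sum_sub_distrib]
    refine (Finset.abs_sum_le_sum_abs _ _).trans
      ((Finset.sum_le_sum fun i _ => hterm i).trans ?_)
    rw [Finset.sum_add_distrib, ← Finset.mul_sum, ← Finset.mul_sum]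
    have c1 := mul_le_mul_of_nonneg_left b1 (sq_nonneg C)
    have c2 := mul_le_mul_of_nonneg_left b2 (sq_nonneg C)
    linarith
  rw [kernelF, kernelF, ← sub_div, abs_div, abs_of_pos hm', div_le_iff₀ hm']
  refine hs.trans (le_of_eq ?_)
  have hsm : Real.sqrt m ≠ 0 := (Real.sqrt_pos.2 hm').ne'
  have hmm : (m : ℝ) = Real.sqrt m * Real.sqrt m := (Real.mul_self_sqrt hm'.le).symm
  generalize Real.sqrt m = s at *
  rw [hmm]
  field_simp
end
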